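/- arXiv:2501.00299 — 6 statements merged into one kernel-verified Lean document; each statement's English description precedes it below -/
import Mathlib

section
/- Let p > 1 and α > p - 1 be real numbers, and for each positive integer n let S_n = ∑_{k=1}^n k^{α-p}. Then for every integer n ≥ 2, S_{n-1}^{-1/(p-1)} - S_n^{-1/(p-1)} ≥ (α-p+1)^{p/(p-1)} / ( (p-1) n^{α/(p-1)} ). -/
/-!
Put `r = α - p`, `q = 1 / (p - 1)` and `N = n ^ (r + 1) / (r + 1)`. The inequality
`√(x * y) * (log y - log x) ≤ y - x`, applied both to `S (n - 1)`, `S n` and to their powers with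
exponent `-q`, reduces the claim to its limit case `q → 0`, which does not involve `q`:
`(r + 1) / n ≤ log (S n) - log (S (n - 1))`.

For `-1 < r ≤ 1` this follows from `S n ≤ N + n ^ r / 2`, which is Bernoulli's inequality for
`r ≤ 0` and the trapezoidal rule for the concave function `x ^ r` for `0 ≤ r`.

For `1 ≤ r` it is proved by induction on `n` in the form
`S (n - 1) * (exp ((r + 1) / n) - 1) ≤ n ^ r`. The induction step is an inequality between the
values of hyperbolic functions at multiples of `1 / n` and `1 / (n + 1)`. With
`L x = coth x - 1 / x`, the case `r = 1` says that `L x / x` is decreasing, and the other cases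
follow from it because `L`, the derivative of `log (sinh x / x)`, is increasing.
-/

open Real Set

section LogarithmicMean

theorem sqrt_mul_log_sub_log_le_sub {x y : ℝ} (hx : 0 < x) (hxy : x ≤ y) :
    √(x * y) * (log y - log x) ≤ y - x := by
  obtain ⟨u, rfl⟩ : ∃ u, exp u = x := ⟨log x, exp_log hx⟩
  obtain ⟨v, rfl⟩ : ∃ v, exp v = y := ⟨log y, exp_log (hx.trans_le hxy)⟩
  have huv : u ≤ v := exp_le_exp.mp hxy
  have hsinh : (v - u) / 2 ≤ sinh ((v - u) / 2) := self_le_sinh_iff.mpr (by linarith)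
  rw [← exp_add, ← exp_half, log_exp, log_exp]
  calc exp ((u + v) / 2) * (v - u)
      ≤ exp ((u + v) / 2) * (2 * sinh ((v - u) / 2)) := by gcongr; linarith
    _ = exp ((u + v) / 2 + (v - u) / 2) - exp ((u + v) / 2 + -((v - u) / 2)) := by
      rw [sinh_eq, exp_add, exp_add]; ring
    _ = exp v - exp u := by ring_nf

theorem mul_sub_mul_rpow_le_rpow_neg_sub_rpow_neg {q x y N : ℝ} (hq : 0 ≤ q) (hx : 0 < x)
    (hxy : x < y) (hN : 0 < N) (h : y - x ≤ N * (log y - log x)) :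
    q * (y - x) * N ^ (-(q + 1)) ≤ x ^ (-q) - y ^ (-q) := by
  have hy : 0 < y := hx.trans hxy
  have hlog : 0 < log y - log x := sub_pos.mpr (log_lt_log hx hxy)
  have hmean : √(x * y) ≤ N :=
    le_of_mul_le_mul_right ((sqrt_mul_log_sub_log_le_sub hx hxy.le).trans h) hlog
  calc q * (y - x) * N ^ (-(q + 1))
      = N ^ (-q) * (q * ((y - x) / N)) := by
        rw [neg_add, rpow_add hN, rpow_neg_one]; ring
    _ ≤ √(x * y) ^ (-q) * (q * (log y - log x)) := by
      gcongr ?_ * (q * ?_)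
      · exact rpow_le_rpow_of_nonpos (by positivity) hmean (by linarith)
      · exact (div_le_iff₀' hN).mpr h
    _ = √(y ^ (-q) * x ^ (-q)) * (log (x ^ (-q)) - log (y ^ (-q))) := by
      rw [← mul_rpow hy.le hx.le, mul_comm y, log_rpow hx, log_rpow hy, sqrt_eq_rpow,
        sqrt_eq_rpow, ← rpow_mul (by positivity), ← rpow_mul (by positivity), mul_comm (1 / 2)]
      ring
    _ ≤ x ^ (-q) - y ^ (-q) :=
      sqrt_mul_log_sub_log_le_sub (by positivity)
        (rpow_le_rpow_of_nonpos hx hxy.le (by linarith))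

end LogarithmicMean

section Quadrature

theorem rpow_le_rpow_add_mul_sub {g x y : ℝ} (hg₀ : 0 ≤ g) (hg₁ : g ≤ 1) (hx : 0 ≤ x)
    (hy : 0 < y) : x ^ g ≤ y ^ g + g * y ^ (g - 1) * (x - y) := by
  have bernoulli : (x / y) ^ g ≤ 1 + g * (x / y - 1) := by
    have := rpow_one_add_le_one_add_mul_self (s := x / y - 1)
      (by linarith [show 0 ≤ x / y by positivity]) hg₀ hg₁
    rwa [add_sub_cancel] at this
  rw [div_rpow hx hy.le, div_le_iff₀ (by positivity)] at bernoulli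
  calc x ^ g ≤ (1 + g * (x / y - 1)) * y ^ g := bernoulli
    _ = y ^ g + g * y ^ (g - 1) * (x - y) := by rw [rpow_sub_one hy.ne']; field_simp

theorem trapezoid_le_integral_of_concaveOn {f : ℝ → ℝ} {a b : ℝ} (hab : a ≤ b)
    (hf : ConcaveOn ℝ (Icc a b) f) (hint : IntervalIntegrable f MeasureTheory.volume a b) :
    (b - a) * ((f a + f b) / 2) ≤ ∫ x in a..b, f x := by
  rcases hab.eq_or_lt with rfl | hlt
  · simp
  have hba : b - a ≠ 0 := (sub_pos.mpr hlt).ne'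
  have hchord : ∀ x ∈ Icc a b, f a + (f b - f a) / (b - a) * (x - a) ≤ f x := by
    intro x ⟨hax, hxb⟩
    have hconc := hf.2 (left_mem_Icc.mpr hab) (right_mem_Icc.mpr hab)
      (div_nonneg (sub_nonneg.mpr hxb) (sub_nonneg.mpr hab))
      (div_nonneg (sub_nonneg.mpr hax) (sub_nonneg.mpr hab)) (by field_simp; ring)
    have hx : (b - x) / (b - a) * a + (x - a) / (b - a) * b = x := by field_simp; ring
    simp only [smul_eq_mul, hx] at hconc
    calc f a + (f b - f a) / (b - a) * (x - a)
        = (b - x) / (b - a) * f a + (x - a) / (b - a) * f b := by field_simp; ring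
      _ ≤ f x := hconc
  calc (b - a) * ((f a + f b) / 2)
      = ∫ x in a..b, (f a + (f b - f a) / (b - a) * (x - a)) := by
        rw [intervalIntegral.integral_add (by simp)
          (Continuous.intervalIntegrable (by fun_prop) _ _), intervalIntegral.integral_const_mul,
          intervalIntegral.integral_comp_sub_right (fun x => x), integral_id,
          intervalIntegral.integral_const, smul_eq_mul]
        field_simp
        ring
    _ ≤ ∫ x in a..b, f x :=
      intervalIntegral.integral_mono_on hab (Continuous.intervalIntegrable (by fun_prop) _ _)
        hint hchord

theorem trapezoid_rpow_le {r x y : ℝ} (hr₀ : 0 ≤ r) (hr₁ : r ≤ 1) (hx : 0 ≤ x) (hxy : x ≤ y) :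
    (y - x) * ((x ^ r + y ^ r) / 2) ≤ (y ^ (r + 1) - x ^ (r + 1)) / (r + 1) := by
  rw [← integral_rpow (Or.inl (by linarith))]
  exact trapezoid_le_integral_of_concaveOn hxy
    ((concaveOn_rpow hr₀ hr₁).subset (fun z hz => hx.trans hz.1) (convex_Icc x y))
    (intervalIntegral.intervalIntegrable_rpow' (by linarith))

end Quadrature

section Langevin

variable {x s t : ℝ}

theorem monotoneOn_of_hasDerivAt_nonneg {D : Set ℝ} (hD : Convex ℝ D) {f f' : ℝ → ℝ}
    (hf : ∀ x ∈ D, HasDerivAt f (f' x) x) (hf' : ∀ x ∈ D, 0 ≤ f' x) : MonotoneOn f D :=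
  monotoneOn_of_hasDerivWithinAt_nonneg hD (fun x hx => (hf x hx).continuousAt.continuousWithinAt)
    (fun x hx => (hf x (interior_subset hx)).hasDerivWithinAt)
    (fun x hx => hf' x (interior_subset hx))

theorem sinh_le_mul_cosh (hx : 0 ≤ x) : sinh x ≤ x * cosh x := by
  have hmono : MonotoneOn (fun x => x * cosh x - sinh x) (Ici 0) := by
    refine monotoneOn_of_hasDerivAt_nonneg (f' := fun x => x * sinh x) (convex_Ici 0)
      (fun x _ => ?_) (fun x (hx : 0 ≤ x) => mul_nonneg hx (sinh_nonneg_iff.mpr hx))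
    exact (((hasDerivAt_id x).mul (hasDerivAt_cosh x)).sub (hasDerivAt_sinh x)).congr_deriv
      (by simp)
  simpa using hmono self_mem_Ici hx hx

theorem two_mul_cosh_sub_one_le_mul_sinh (hx : 0 ≤ x) :
    2 * (cosh x - 1) ≤ x * sinh x := by
  obtain ⟨y, rfl⟩ : ∃ y, x = 2 * y := ⟨x / 2, by ring⟩
  have hy : 0 ≤ y := by linarith
  calc 2 * (cosh (2 * y) - 1) = 4 * sinh y * sinh y := by rw [cosh_two_mul, cosh_sq]; ring
    _ ≤ 4 * sinh y * (y * cosh y) := by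
      gcongr
      exact sinh_le_mul_cosh hy
    _ = 2 * y * sinh (2 * y) := by rw [sinh_two_mul]; ring

theorem three_mul_sinh_le_mul_two_add_cosh (hx : 0 ≤ x) :
    3 * sinh x ≤ x * (2 + cosh x) := by
  have hmono : MonotoneOn (fun x => x * (2 + cosh x) - 3 * sinh x) (Ici 0) := by
    refine monotoneOn_of_hasDerivAt_nonneg (f' := fun x => x * sinh x - 2 * (cosh x - 1))
      (convex_Ici 0) (fun x _ => ?_)
      (fun x hx => sub_nonneg.mpr (two_mul_cosh_sub_one_le_mul_sinh hx))
    exact (((hasDerivAt_id x).mul ((hasDerivAt_cosh x).const_add 2)).sub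
      ((hasDerivAt_sinh x).const_mul 3)).congr_deriv (by simp only [id]; ring)
  simpa using hmono self_mem_Ici hx hx

theorem two_mul_sinh_sq_le (hx : 0 ≤ x) :
    2 * sinh x ^ 2 ≤ x ^ 2 + x * sinh x * cosh x := by
  have hmono : MonotoneOn (fun x => x ^ 2 + x * sinh x * cosh x - 2 * sinh x ^ 2) (Ici 0) := by
    refine monotoneOn_of_hasDerivAt_nonneg
      (f' := fun x => (2 * x * (2 + cosh (2 * x)) - 3 * sinh (2 * x)) / 2)
      (convex_Ici 0) (fun x _ => ?_) (fun x (hx : 0 ≤ x) => ?_)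
    · refine (((hasDerivAt_pow 2 x).add (((hasDerivAt_id x).mul (hasDerivAt_sinh x)).mul
        (hasDerivAt_cosh x))).sub (((hasDerivAt_sinh x).pow 2).const_mul 2)).congr_deriv ?_
      simp only [id, Pi.mul_apply, cosh_two_mul, sinh_two_mul]
      ring
    · linarith [three_mul_sinh_le_mul_two_add_cosh (x := 2 * x) (by linarith)]
  simpa using hmono self_mem_Ici hx hx

/-- The Langevin function `coth x - 1 / x`, the logarithmic derivative of `sinh x / x`; at `0` it
takes its limiting value `0`. -/
noncomputable def langevin (x : ℝ) : ℝ := cosh x / sinh x - 1 / x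

/-- The logarithm of `sinh x / x`, a primitive of `langevin` on the positive axis; at `0` it takes
its limiting value `0`. -/
noncomputable def logSinhDiv (x : ℝ) : ℝ := log (sinh x / x)

theorem hasDerivAt_langevin (hx : 0 < x) :
    HasDerivAt langevin (1 / x ^ 2 - 1 / sinh x ^ 2) x := by
  have hsinh : sinh x ≠ 0 := (sinh_pos_iff.mpr hx).ne'
  refine (((hasDerivAt_cosh x).div (hasDerivAt_sinh x) hsinh).sub
    ((hasDerivAt_const x 1).div (hasDerivAt_id x) hx.ne')).congr_deriv ?_
  simp only [id]
  field_simp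
  linear_combination (-x ^ 2) * cosh_sq x

theorem hasDerivAt_logSinhDiv (hx : 0 < x) :
    HasDerivAt logSinhDiv (langevin x) x := by
  have hsinh : 0 < sinh x := sinh_pos_iff.mpr hx
  refine (((hasDerivAt_sinh x).div (hasDerivAt_id x) hx.ne').log
    (div_pos hsinh hx).ne').congr_deriv ?_
  simp only [id, langevin, Pi.div_apply]
  field_simp

theorem monotoneOn_langevin : MonotoneOn langevin (Ioi 0) := by
  refine monotoneOn_of_hasDerivAt_nonneg (convex_Ioi 0) (fun x hx => hasDerivAt_langevin hx)
    (fun x (hx : 0 < x) => sub_nonneg.mpr ?_)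
  gcongr
  exact self_le_sinh_iff.mpr hx.le

theorem mul_inv_sq_sub_inv_sinh_sq_le_langevin (hx : 0 < x) :
    x * (1 / x ^ 2 - 1 / sinh x ^ 2) ≤ langevin x := by
  have hdiff : langevin x - x * (1 / x ^ 2 - 1 / sinh x ^ 2) =
      (x ^ 2 + x * sinh x * cosh x - 2 * sinh x ^ 2) / (x * sinh x ^ 2) := by
    rw [langevin]; field_simp; ring
  have hnum := sub_nonneg.mpr (two_mul_sinh_sq_le hx.le)
  rw [← sub_nonneg, hdiff]
  positivity

theorem antitoneOn_langevin_div_self : AntitoneOn (fun x => langevin x / x) (Ioi 0) := by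
  have hmono : MonotoneOn (fun x => -(langevin x / x)) (Ioi 0) := by
    refine monotoneOn_of_hasDerivAt_nonneg (convex_Ioi 0)
      (fun x (hx : 0 < x) =>
        ((hasDerivAt_langevin hx).div (hasDerivAt_id x) hx.ne').neg)
      (fun x hx => neg_nonneg.mpr (div_nonpos_of_nonpos_of_nonneg ?_ (sq_nonneg _)))
    simp only [id]
    linarith [mul_inv_sq_sub_inv_sinh_sq_le_langevin hx]
  simpa using hmono.neg

theorem mul_logSinhDiv_sub_le {l : ℝ} (hl : 1 ≤ l) (ht : 0 < t) (hts : t ≤ s) :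
    l * (logSinhDiv s - logSinhDiv t) ≤ logSinhDiv (l * s) - logSinhDiv (l * t) := by
  have hl₀ : 0 < l := by linarith
  have hmono : MonotoneOn (fun x => logSinhDiv (l * x) - l * logSinhDiv x) (Ioi 0) := by
    refine monotoneOn_of_hasDerivAt_nonneg (f' := fun x => l * (langevin (l * x) - langevin x))
      (convex_Ioi 0) (fun x (hx : 0 < x) => ?_) (fun x (hx : 0 < x) => ?_)
    · refine (((hasDerivAt_logSinhDiv (mul_pos hl₀ hx)).comp x
        ((hasDerivAt_id x).const_mul l)).sub
        ((hasDerivAt_logSinhDiv hx).const_mul l)).congr_deriv ?_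
      ring
    · exact mul_nonneg hl₀.le (sub_nonneg.mpr
        (monotoneOn_langevin hx (mul_pos hl₀ hx) (le_mul_of_one_le_left hx.le hl)))
  have hst : logSinhDiv (l * t) - l * logSinhDiv t ≤ logSinhDiv (l * s) - l * logSinhDiv s :=
    hmono ht (ht.trans_le hts) hts
  linarith

theorem rpow_mul_sinh_mul {l : ℝ} (hl : 0 < l) (hx : 0 < x) (r : ℝ) :
    x ^ r * sinh (l * x) = l * exp ((r + 1) * log x + logSinhDiv (l * x)) := by
  have hlx : 0 < l * x := mul_pos hl hx
  rw [exp_add, mul_comm (r + 1), ← rpow_def_of_pos hx, rpow_add_one hx.ne', logSinhDiv,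
    exp_log (div_pos (sinh_pos_iff.mpr hlx) hlx)]
  field_simp

theorem add_le_two_mul_log_sub_add_logSinhDiv_sub (ht : 0 < t) (hs : 0 < s)
    (h : t⁻¹ = s⁻¹ + 1) :
    t + s ≤ 2 * (log s - log t) + (logSinhDiv s - logSinhDiv t) := by
  have hts : t ≤ s := (inv_le_inv₀ hs ht).mp (by linarith)
  have hdiv : exp s / (s * sinh s) ≤ exp (-t) / (t * sinh t) :=
    calc exp s / (s * sinh s) = langevin s / s + s⁻¹ ^ 2 + s⁻¹ := by
          rw [langevin, ← cosh_add_sinh]; field_simp; ring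
      _ ≤ langevin t / t + s⁻¹ ^ 2 + s⁻¹ := by
          gcongr ?_ + _ + _
          exact antitoneOn_langevin_div_self ht hs hts
      _ = langevin t / t + t⁻¹ ^ 2 - t⁻¹ := by rw [h]; ring
      _ = exp (-t) / (t * sinh t) := by rw [langevin, ← cosh_sub_sinh]; field_simp; ring
  have hexp : ∀ x : ℝ, 0 < x → x * sinh x = exp (2 * log x + logSinhDiv x) := fun x hx => by
    simpa [one_add_one_eq_two] using rpow_mul_sinh_mul one_pos hx 1
  rw [hexp s hs, hexp t ht, ← exp_sub, ← exp_sub, exp_le_exp] at hdiv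
  linarith

theorem exp_two_mul_sub_one (x : ℝ) : exp (2 * x) - 1 = 2 * (exp x * sinh x) := by
  rw [sinh_eq, exp_neg, two_mul, exp_add]
  field_simp

theorem one_sub_exp_neg_two_mul (x : ℝ) : 1 - exp (-(2 * x)) = 2 * (exp (-x) * sinh x) := by
  rw [← mul_neg, ← neg_sub, exp_two_mul_sub_one, sinh_neg]
  ring

theorem rpow_mul_exp_sub_one_le_rpow_mul_one_sub_exp {r : ℝ} (hr : 1 ≤ r) (ht : 0 < t)
    (hs : 0 < s) (h : t⁻¹ = s⁻¹ + 1) :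
    t ^ r * (exp ((r + 1) * t) - 1) ≤ s ^ r * (1 - exp (-((r + 1) * s))) := by
  obtain ⟨l, rfl⟩ : ∃ l, r = 2 * l - 1 := ⟨(r + 1) / 2, by ring⟩
  have hl : 1 ≤ l := by linarith
  have hts : t ≤ s := (inv_le_inv₀ hs ht).mp (by linarith)
  have hexponent : l * t + (2 * l * log t + logSinhDiv (l * t)) ≤
      -(l * s) + (2 * l * log s + logSinhDiv (l * s)) := by
    have hquadratic := mul_le_mul_of_nonneg_left
      (add_le_two_mul_log_sub_add_logSinhDiv_sub ht hs h) (zero_le_one.trans hl)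
    linarith [mul_logSinhDiv_sub_le hl ht hts]
  calc t ^ (2 * l - 1) * (exp ((2 * l - 1 + 1) * t) - 1)
      = 2 * exp (l * t) * (t ^ (2 * l - 1) * sinh (l * t)) := by
        rw [sub_add_cancel, mul_assoc 2 l, exp_two_mul_sub_one]; ring
    _ = 2 * l * exp (l * t + (2 * l * log t + logSinhDiv (l * t))) := by
        rw [rpow_mul_sinh_mul (by linarith) ht, sub_add_cancel, exp_add (l * t)]; ring
    _ ≤ 2 * l * exp (-(l * s) + (2 * l * log s + logSinhDiv (l * s))) := by gcongr
    _ = 2 * exp (-(l * s)) * (s ^ (2 * l - 1) * sinh (l * s)) := by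
        rw [rpow_mul_sinh_mul (by linarith) hs, sub_add_cancel, exp_add (-(l * s))]; ring
    _ = s ^ (2 * l - 1) * (1 - exp (-((2 * l - 1 + 1) * s))) := by
        rw [sub_add_cancel, mul_assoc 2 l, one_sub_exp_neg_two_mul]; ring

theorem rpow_mul_exp_div_sub_one_le {r : ℝ} (hr : 1 ≤ r) (hx : 0 < x) :
    x ^ r * (exp ((r + 1) / (x + 1)) - 1) ≤ (x + 1) ^ r * (1 - exp (-((r + 1) / x))) := by
  have hx₁ : 0 < x + 1 := by linarith
  have hinv := rpow_mul_exp_sub_one_le_rpow_mul_one_sub_exp hr (inv_pos.mpr hx₁) (inv_pos.mpr hx)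
    (by simp only [inv_inv])
  rw [inv_rpow hx₁.le, inv_rpow hx.le, ← div_eq_mul_inv, ← div_eq_mul_inv,
    inv_mul_le_iff₀ (by positivity), mul_left_comm, le_inv_mul_iff₀ (by positivity)] at hinv
  exact hinv

end Langevin

section PowerSum

/-- The sum `1 ^ r + 2 ^ r + ⋯ + n ^ r` with real exponent `r`. -/
noncomputable def powerSum (r : ℝ) (n : ℕ) : ℝ := ∑ k ∈ Finset.Icc 1 n, (k : ℝ) ^ r

theorem powerSum_zero (r : ℝ) : powerSum r 0 = 0 := by simp [powerSum]

theorem powerSum_succ (r : ℝ) (n : ℕ) :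
    powerSum r (n + 1) = powerSum r n + ((n : ℝ) + 1) ^ r := by
  rw [powerSum, powerSum, Finset.sum_Icc_succ_top (by omega), Nat.cast_succ]

theorem powerSum_pos (r : ℝ) {n : ℕ} (hn : n ≠ 0) : 0 < powerSum r n := by
  refine Finset.sum_pos (fun k hk => ?_) ⟨1, Finset.mem_Icc.mpr ⟨le_rfl, by omega⟩⟩
  have : 0 < k := (Finset.mem_Icc.mp hk).1
  positivity

variable {r : ℝ}

theorem powerSum_le_of_nonpos (hr : -1 < r) (hr₀ : r ≤ 0) (n : ℕ) :
    powerSum r n ≤ (n : ℝ) ^ (r + 1) / (r + 1) := by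
  have hr₁ : 0 < r + 1 := by linarith
  induction n with
  | zero => rw [powerSum_zero]; positivity
  | succ n ih =>
    have htangent := rpow_le_rpow_add_mul_sub hr₁.le (by linarith) n.cast_nonneg n.cast_add_one_pos
    rw [powerSum_succ, Nat.cast_succ]
    rw [le_div_iff₀ hr₁] at ih ⊢
    rw [add_sub_cancel_right] at htangent
    linarith

theorem powerSum_le_of_nonneg_of_le_one (hr₀ : 0 ≤ r) (hr₁ : r ≤ 1) (n : ℕ) :
    powerSum r n ≤ (n : ℝ) ^ (r + 1) / (r + 1) + (n : ℝ) ^ r / 2 := by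
  induction n with
  | zero => rw [powerSum_zero]; positivity
  | succ n ih =>
    have htrapezoid := trapezoid_rpow_le hr₀ hr₁ n.cast_nonneg (le_add_of_nonneg_right zero_le_one)
    rw [powerSum_succ, Nat.cast_succ]
    rw [add_sub_cancel_left, sub_div] at htrapezoid
    linarith

theorem powerSum_le (hr : -1 < r) (hr₁ : r ≤ 1) (n : ℕ) :
    powerSum r n ≤ (n : ℝ) ^ (r + 1) / (r + 1) + (n : ℝ) ^ r / 2 := by
  rcases le_total r 0 with hneg | hnonneg
  · have hhalf : 0 ≤ (n : ℝ) ^ r / 2 := by positivity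
    linarith [powerSum_le_of_nonpos hr hneg n]
  · exact powerSum_le_of_nonneg_of_le_one hnonneg hr₁ n

theorem powerSum_mul_exp_sub_one_le (hr : 1 ≤ r) (n : ℕ) :
    powerSum r n * (exp ((r + 1) / (n + 1)) - 1) ≤ ((n : ℝ) + 1) ^ r := by
  induction n with
  | zero => simp [powerSum_zero]
  | succ n ih =>
    have hn : 0 < (n : ℝ) + 1 := n.cast_add_one_pos
    have hstep := rpow_mul_exp_div_sub_one_le hr hn
    rw [powerSum_succ, Nat.cast_succ]
    set x := (n : ℝ) + 1
    have hgap : 0 < 1 - exp (-((r + 1) / x)) := by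
      rw [sub_pos, exp_lt_one_iff, neg_lt_zero]; positivity
    have hnext : 0 ≤ exp ((r + 1) / (x + 1)) - 1 := by
      rw [sub_nonneg, one_le_exp_iff]; positivity
    have hsum : powerSum r n + x ^ r ≤ x ^ r / (1 - exp (-((r + 1) / x))) := by
      rw [le_div_iff₀ hgap]
      calc (powerSum r n + x ^ r) * (1 - exp (-((r + 1) / x)))
          = powerSum r n * (exp ((r + 1) / x) - 1) * exp (-((r + 1) / x)) +
              x ^ r * (1 - exp (-((r + 1) / x))) := by rw [exp_neg]; field_simp
        _ ≤ x ^ r * exp (-((r + 1) / x)) + x ^ r * (1 - exp (-((r + 1) / x))) := by gcongr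
        _ = x ^ r := by ring
    calc (powerSum r n + x ^ r) * (exp ((r + 1) / (x + 1)) - 1)
        ≤ x ^ r / (1 - exp (-((r + 1) / x))) * (exp ((r + 1) / (x + 1)) - 1) := by gcongr
      _ = x ^ r * (exp ((r + 1) / (x + 1)) - 1) / (1 - exp (-((r + 1) / x))) := by ring
      _ ≤ (x + 1) ^ r := (div_le_iff₀ hgap).mpr hstep

theorem le_log_add_sub_log {x a c : ℝ} (hx : 0 < x) (ha : 0 < a) (hc : 0 < c)
    (h : x + a / 2 ≤ a / c) : c ≤ log (x + a) - log x := by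
  have hdiv : (x + a) / x = 1 + a / x := by field_simp
  rw [← log_div (by positivity) hx.ne', hdiv]
  calc c ≤ a / (x + a / 2) := (le_div_comm₀ (by positivity) hc).mp h
    _ = 2 * (a / x) / (a / x + 2) := by field_simp; ring
    _ ≤ log (1 + a / x) := le_log_one_add_of_nonneg (by positivity)

theorem div_le_log_powerSum_succ_sub (hr : -1 < r) {n : ℕ} (hn : n ≠ 0) :
    (r + 1) / (n + 1) ≤ log (powerSum r (n + 1)) - log (powerSum r n) := by
  have hpos := powerSum_pos r hn
  have hr₁ : 0 < r + 1 := by linarith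
  have hn₁ : 0 < (n : ℝ) + 1 := n.cast_add_one_pos
  rcases le_total r 1 with hle | hge
  · have hsum : powerSum r (n + 1) ≤ ((n : ℝ) + 1) ^ (r + 1) / (r + 1) + ((n : ℝ) + 1) ^ r / 2 := by
      rw [← Nat.cast_succ]
      exact powerSum_le hr hle (n + 1)
    rw [powerSum_succ] at hsum ⊢
    refine le_log_add_sub_log hpos (by positivity) (by positivity) ?_
    rw [rpow_add_one hn₁.ne'] at hsum
    rw [div_div_eq_mul_div]
    linarith
  · rw [le_sub_iff_add_le, ← log_exp ((r + 1) / (n + 1)), ← log_mul (exp_pos _).ne' hpos.ne']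
    refine log_le_log (by positivity) ?_
    rw [powerSum_succ]
    linarith [powerSum_mul_exp_sub_one_le hge n]

theorem le_powerSum_rpow_neg_sub {q : ℝ} (hr : -1 < r) (hq : 0 ≤ q) {n : ℕ} (hn : n ≠ 0) :
    q * (r + 1) ^ (q + 1) / ((n : ℝ) + 1) ^ ((r + 1) * q + 1) ≤
      powerSum r n ^ (-q) - powerSum r (n + 1) ^ (-q) := by
  have hr₁ : 0 < r + 1 := by linarith
  have hn₁ : 0 < (n : ℝ) + 1 := n.cast_add_one_pos
  have hdiff : powerSum r (n + 1) - powerSum r n = ((n : ℝ) + 1) ^ r := by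
    rw [powerSum_succ, add_sub_cancel_left]
  have hterm : 0 < ((n : ℝ) + 1) ^ r := by positivity
  calc q * (r + 1) ^ (q + 1) / ((n : ℝ) + 1) ^ ((r + 1) * q + 1)
      = q * ((n : ℝ) + 1) ^ r * (((n : ℝ) + 1) ^ (r + 1) / (r + 1)) ^ (-(q + 1)) := by
        have hexponent : ((n : ℝ) + 1) ^ ((r + 1) * (q + 1)) =
            ((n : ℝ) + 1) ^ ((r + 1) * q + 1) * ((n : ℝ) + 1) ^ r := by
          rw [← rpow_add hn₁]; ring_nf
        rw [rpow_neg (by positivity), div_rpow (by positivity) hr₁.le, ← rpow_mul hn₁.le, hexponent]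
        field_simp
    _ ≤ powerSum r n ^ (-q) - powerSum r (n + 1) ^ (-q) := by
        rw [← hdiff]
        refine mul_sub_mul_rpow_le_rpow_neg_sub_rpow_neg hq (powerSum_pos r hn) (by linarith)
          (by positivity) ?_
        calc powerSum r (n + 1) - powerSum r n
            = ((n : ℝ) + 1) ^ (r + 1) / (r + 1) * ((r + 1) / (n + 1)) := by
              rw [hdiff, rpow_add_one hn₁.ne']; field_simp
          _ ≤ ((n : ℝ) + 1) ^ (r + 1) / (r + 1) *
              (log (powerSum r (n + 1)) - log (powerSum r n)) := by
            gcongr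
            exact div_le_log_powerSum_succ_sub hr hn

end PowerSum

/-- Corollary 4.3 (simplified form): for `p > 1`, `α > p - 1` and
`S_n = ∑_{k=1}^n k^{α-p}`, for every `n ≥ 2` one has
`S_{n-1}^{-1/(p-1)} - S_n^{-1/(p-1)} ≥ (α-p+1)^{p/(p-1)} / ((p-1) n^{α/(p-1)})`. -/
theorem stmt_12 (p α : ℝ) (hp : 1 < p) (hα : p - 1 < α)
    (S : ℕ → ℝ) (hS : ∀ n, S n = ∑ k ∈ Finset.Icc 1 n, (k : ℝ) ^ (α - p)) :
    ∀ n : ℕ, 2 ≤ n →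
      S (n - 1) ^ (-1 / (p - 1)) - S n ^ (-1 / (p - 1)) ≥
        (α - p + 1) ^ (p / (p - 1)) / ((p - 1) * (n : ℝ) ^ (α / (p - 1))) := by
  intro n hn
  obtain ⟨m, rfl⟩ : ∃ m, n = m + 1 := ⟨n - 1, by omega⟩
  obtain rfl : S = powerSum (α - p) := funext hS
  have hp₁ : 0 < p - 1 := sub_pos.mpr hp
  have hmain := le_powerSum_rpow_neg_sub (r := α - p) (q := 1 / (p - 1)) (n := m)
    (by linarith) (by positivity) (by omega)
  have hp_exponent : 1 / (p - 1) + 1 = p / (p - 1) := by field_simp; ring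
  have hα_exponent : (α - p + 1) * (1 / (p - 1)) + 1 = α / (p - 1) := by field_simp; ring
  rw [hp_exponent, hα_exponent, one_div_mul_eq_div, div_div, ← neg_div] at hmain
  rwa [Nat.add_sub_cancel, Nat.cast_succ]
end

section
/- Let p > 1 and let α ≥ 0 be a real number with α ≠ p - 1. Then for every finitely supported sequence u : ℕ → ℝ with u_0 = 0, ∑_{n=1}^∞ |u_n - u_{n-1}|^p n^α ≥ |(α - p + 1)/p|^p · ∑_{n=1}^∞ |u_n|^p n^{α-p}. -/
/-!
Put `β = |α - p + 1|`. Radon's inequality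
`‖a‖ ^ p / (s + t) ^ (p - 1) ≤ ‖a - b‖ ^ p / s ^ (p - 1) + ‖b‖ ^ p / t ^ (p - 1)`,
applied to neighbouring values of the sequence with suitable weights `s` and `t`, bounds each term
of the Hardy sum by a term of the energy plus a difference of fluxes
`(β / p) ^ (p - 1) * x ^ (± β) * ‖u n‖ ^ p`, with the sign of `α - p + 1` in the exponent and `x`
close to `n`, and these differences telescope. For `α < p - 1` the flux vanishes at `0` because
`u 0 = 0`. For `α > p - 1` it has to vanish at infinity; sequences tending to `0` are reduced to
eventually vanishing ones by soft thresholding, which does not increase the energy.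
-/

open Filter Topology

theorem one_add_rpow_le_exp_mul {x r : ℝ} (hx : 0 ≤ 1 + x) (hr : 0 ≤ r) :
    (1 + x) ^ r ≤ Real.exp (r * x) := by
  rw [mul_comm, Real.exp_mul, add_comm]
  exact Real.rpow_le_rpow (by linarith) (Real.add_one_le_exp x) hr

theorem rpow_add_mul_rpow_sub_one_le {r x h : ℝ} (hr : 1 ≤ r) (hx : 0 < x) (hxh : 0 ≤ x + h) :
    x ^ r + r * h * x ^ (r - 1) ≤ (x + h) ^ r := by
  have bernoulli := one_add_mul_self_le_rpow_one_add (s := h / x)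
    (by rw [le_div_iff₀ hx]; linarith) hr
  calc x ^ r + r * h * x ^ (r - 1) = x ^ r * (1 + r * (h / x)) := by
        rw [Real.rpow_sub_one hx.ne']; ring
    _ ≤ x ^ r * (1 + h / x) ^ r := by gcongr
    _ = (x + h) ^ r := by
        rw [← Real.mul_rpow hx.le (by rw [one_add_div hx.ne']; positivity)]; field_simp

theorem add_rpow_le_rpow_add_mul_rpow_sub_one {r x h : ℝ} (hr₀ : 0 ≤ r) (hr₁ : r ≤ 1)
    (hx : 0 < x) (hxh : 0 ≤ x + h) :
    (x + h) ^ r ≤ x ^ r + r * h * x ^ (r - 1) := by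
  have bernoulli := rpow_one_add_le_one_add_mul_self (s := h / x)
    (by rw [le_div_iff₀ hx]; linarith) hr₀ hr₁
  calc (x + h) ^ r = x ^ r * (1 + h / x) ^ r := by
        rw [← Real.mul_rpow hx.le (by rw [one_add_div hx.ne']; positivity)]; field_simp
    _ ≤ x ^ r * (1 + r * (h / x)) := by gcongr
    _ = x ^ r + r * h * x ^ (r - 1) := by rw [Real.rpow_sub_one hx.ne']; ring

/-- Radon's inequality for two terms. -/
theorem add_rpow_div_add_rpow_le {p x y a b : ℝ} (hp : 1 ≤ p) (hx : 0 ≤ x) (hy : 0 ≤ y)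
    (ha : 0 < a) (hb : 0 ≤ b) (hby : b = 0 → y = 0) :
    (x + y) ^ p / (a + b) ^ (p - 1) ≤ x ^ p / a ^ (p - 1) + y ^ p / b ^ (p - 1) := by
  have perspective {z c : ℝ} (hz : 0 ≤ z) (hc : 0 ≤ c) (hcz : c = 0 → z = 0) :
      z ^ p / c ^ (p - 1) = c * (z / c) ^ p := by
    rcases hc.eq_or_lt with rfl | hc
    · simp [hcz rfl, Real.zero_rpow (by linarith : p ≠ 0)]
    · rw [Real.div_rpow hz hc.le, Real.rpow_sub_one hc.ne']
      field_simp
  have hab : 0 < a + b := by positivity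
  have jensen : ((x + y) / (a + b)) ^ p ≤
      a / (a + b) * (x / a) ^ p + b / (a + b) * (y / b) ^ p := by
    have barycenter : a / (a + b) * (x / a) + b / (a + b) * (y / b) = (x + y) / (a + b) := by
      rcases hb.eq_or_lt with rfl | hb
      · simp [hby rfl, ha.ne']
      · field_simp
    rw [← barycenter]
    exact (convexOn_rpow hp).2 (Set.mem_Ici.2 (div_nonneg hx ha.le))
      (Set.mem_Ici.2 (div_nonneg hy hb)) (div_nonneg ha.le hab.le) (div_nonneg hb hab.le)
      (by rw [← add_div, div_self hab.ne'])
  rw [perspective (by positivity) hab.le (fun h ↦ absurd h hab.ne'),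
    perspective hx ha.le (fun h ↦ absurd h ha.ne'), perspective hy hb hby]
  calc (a + b) * ((x + y) / (a + b)) ^ p
      ≤ (a + b) * (a / (a + b) * (x / a) ^ p + b / (a + b) * (y / b) ^ p) := by gcongr
    _ = a * (x / a) ^ p + b * (y / b) ^ p := by field_simp

theorem sum_range_add_le_of_step {f g F : ℕ → ℝ} (h : ∀ n, f n + F (n + 1) ≤ g n + F n) (N : ℕ) :
    ∑ n ∈ Finset.range N, f n + F N ≤ ∑ n ∈ Finset.range N, g n + F 0 := by
  induction N with
  | zero => simp
  | succ N ih => rw [Finset.sum_range_succ, Finset.sum_range_succ]; linarith [h N]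

section

variable {E : Type*} [SeminormedAddCommGroup E] {p β : ℝ}

theorem norm_rpow_div_add_rpow_le {s t : ℝ} (hp : 1 ≤ p) (hs : 0 < s) (ht : 0 ≤ t) (a b : E)
    (hb : t = 0 → b = 0) :
    ‖a‖ ^ p / (s + t) ^ (p - 1) ≤ ‖a - b‖ ^ p / s ^ (p - 1) + ‖b‖ ^ p / t ^ (p - 1) := by
  calc ‖a‖ ^ p / (s + t) ^ (p - 1) ≤ (‖a - b‖ + ‖b‖) ^ p / (s + t) ^ (p - 1) := by
        gcongr
        simpa using norm_add_le (a - b) b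
    _ ≤ _ := add_rpow_div_add_rpow_le hp (norm_nonneg _) (norm_nonneg _) hs ht (by simp_all)

-- The two summands raised to `p - 1` are the Radon weights of the step from `x` to `x + 1`; the
-- exponent `β / (p - 1)` is chosen so that the second weight contributes the ratio of the fluxes.
theorem hardy_subcritical_rate_le_one {x : ℝ} (hp : 1 < p) (hβ₀ : 0 < β) (hβ : β ≤ p - 1)
    (hx : 0 ≤ x) :
    (1 + β / p / (x + 1)) *
      (β / p / (x + 1) + (x / (x + 1)) ^ (β / (p - 1))) ^ (p - 1) ≤ 1 := by
  have hq : 0 < p - 1 := by linarith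
  set z := β / p / (x + 1) with hz
  have bernoulli : (x / (x + 1)) ^ (β / (p - 1)) ≤ 1 - β / (p - 1) / (x + 1) := by
    have := rpow_one_add_le_one_add_mul_self (s := -(1 / (x + 1)))
      (by rw [neg_le_neg_iff, div_le_one (by positivity)]; linarith)
      (p := β / (p - 1)) (by positivity) (by rwa [div_le_one hq])
    convert this using 1
    · congr 1; field_simp; ring
    · ring
  have base_le : z + (x / (x + 1)) ^ (β / (p - 1)) ≤ 1 + -(z / (p - 1)) := by
    have : z + z / (p - 1) = β / (p - 1) / (x + 1) := by rw [hz]; field_simp; ring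
    linarith
  have base_nonneg : 0 ≤ z + (x / (x + 1)) ^ (β / (p - 1)) := by positivity
  calc (1 + z) * (z + (x / (x + 1)) ^ (β / (p - 1))) ^ (p - 1)
      ≤ Real.exp z * (1 + -(z / (p - 1))) ^ (p - 1) := by
        gcongr
        linarith [Real.add_one_le_exp z]
    _ ≤ Real.exp z * Real.exp ((p - 1) * -(z / (p - 1))) := by
        gcongr
        exact one_add_rpow_le_exp_mul (base_nonneg.trans base_le) hq.le
    _ = 1 := by
        rw [← Real.exp_add, mul_neg, mul_div_cancel₀ _ hq.ne', add_neg_cancel, Real.exp_zero]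

theorem hardy_subcritical_step {x : ℝ} (hp : 1 < p) (hβ₀ : 0 < β) (hβ : β ≤ p - 1)
    (hx : 0 ≤ x) (a b : E) (hb : x = 0 → b = 0) :
    (β / p) ^ p * (‖a‖ ^ p * (x + 1) ^ (-β - 1)) +
        (β / p) ^ (p - 1) * (x + 1) ^ (-β) * ‖a‖ ^ p ≤
      ‖a - b‖ ^ p * (x + 1) ^ (p - 1 - β) + (β / p) ^ (p - 1) * x ^ (-β) * ‖b‖ ^ p := by
  have hq : 0 < p - 1 := by linarith
  have hc : 0 < β / p := by positivity
  have hX : 0 < x + 1 := by positivity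
  have hpow : ((x / (x + 1)) ^ (β / (p - 1))) ^ (p - 1) = x ^ β / (x + 1) ^ β := by
    rw [← Real.rpow_mul (by positivity), div_mul_cancel₀ _ hq.ne', Real.div_rpow hx hX.le]
  have radon := norm_rpow_div_add_rpow_le hp.le (div_pos hc hX)
    (t := (x / (x + 1)) ^ (β / (p - 1))) (by positivity) a b
    (fun h ↦ hb (by simpa [hX.ne'] using ((Real.rpow_eq_zero_iff_of_nonneg (by positivity)).1 h).1))
  have rate := hardy_subcritical_rate_le_one hp hβ₀ hβ hx
  set D := β / p / (x + 1) + (x / (x + 1)) ^ (β / (p - 1))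
  have : 0 < D := by positivity
  calc _ = (β / p) ^ (p - 1) * (x + 1) ^ (-β) * (‖a‖ ^ p * (1 + β / p / (x + 1))) := by
        rw [Real.rpow_sub_one hc.ne', Real.rpow_sub_one hX.ne']; field_simp; ring
    _ ≤ (β / p) ^ (p - 1) * (x + 1) ^ (-β) * (‖a‖ ^ p * (1 / D ^ (p - 1))) := by
        gcongr
        rwa [le_div_iff₀ (by positivity)]
    _ ≤ (β / p) ^ (p - 1) * (x + 1) ^ (-β) * (‖a - b‖ ^ p / (β / p / (x + 1)) ^ (p - 1) +
          ‖b‖ ^ p / (x ^ β / (x + 1) ^ β)) := by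
        rw [mul_one_div, ← hpow]
        gcongr
    _ = _ := by
        rw [Real.div_rpow hc.le hX.le, Real.rpow_neg hX.le, Real.rpow_neg hx,
          Real.rpow_sub hX (p - 1) β]
        field_simp

theorem hardy_subcritical_sum_range_le (hp : 1 < p) (hβ₀ : 0 < β) (hβ : β ≤ p - 1) {u : ℕ → E}
    (hu₀ : u 0 = 0) (N : ℕ) :
    (β / p) ^ p * ∑ n ∈ Finset.range N, ‖u (n + 1)‖ ^ p * ((n : ℝ) + 1) ^ (-β - 1) ≤
      ∑ n ∈ Finset.range N, ‖u (n + 1) - u n‖ ^ p * ((n : ℝ) + 1) ^ (p - 1 - β) := by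
  have telescoped := sum_range_add_le_of_step
    (f := fun n ↦ (β / p) ^ p * (‖u (n + 1)‖ ^ p * ((n : ℝ) + 1) ^ (-β - 1)))
    (g := fun n ↦ ‖u (n + 1) - u n‖ ^ p * ((n : ℝ) + 1) ^ (p - 1 - β))
    (F := fun n ↦ (β / p) ^ (p - 1) * (n : ℝ) ^ (-β) * ‖u n‖ ^ p) (fun n ↦ by
      push_cast
      exact hardy_subcritical_step hp hβ₀ hβ n.cast_nonneg _ _ (fun h ↦ by simp_all)) N
  simp only [hu₀, norm_zero, Real.zero_rpow (by linarith : p ≠ 0), mul_zero, add_zero,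
    ← Finset.mul_sum] at telescoped
  exact le_of_add_le_of_nonneg_left telescoped (by positivity)

theorem hardy_supercritical_rate_le {x : ℝ} (hp : 1 < p) (hβ : 0 ≤ β) (hx : 0 ≤ x + 1 / p) :
    (1 + β / p / (x + 1)) ^ (p - 1) * (x + 1 / p) ^ β ≤ (x + 1) ^ β := by
  have hp_inv : 1 / p < 1 := by rw [div_lt_one (by linarith)]; exact hp
  have hX : 0 < x + 1 := by linarith
  set w := (1 / p - 1) / (x + 1) with hw
  have hfactor : x + 1 / p = (x + 1) * (1 + w) := by rw [hw]; field_simp; ring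
  have hw_nonneg : 0 ≤ 1 + w := nonneg_of_mul_nonneg_right (hfactor ▸ hx) hX
  calc (1 + β / p / (x + 1)) ^ (p - 1) * (x + 1 / p) ^ β
      = (x + 1) ^ β * ((1 + β / p / (x + 1)) ^ (p - 1) * (1 + w) ^ β) := by
        rw [hfactor, Real.mul_rpow hX.le hw_nonneg]; ring
    _ ≤ (x + 1) ^ β * (Real.exp ((p - 1) * (β / p / (x + 1))) * Real.exp (β * w)) := by
        gcongr
        · exact one_add_rpow_le_exp_mul (by positivity) (by linarith)
        · exact one_add_rpow_le_exp_mul hw_nonneg hβ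
    _ = (x + 1) ^ β := by
        have : (p - 1) * (β / p / (x + 1)) + β * w = 0 := by rw [hw]; field_simp; ring
        rw [← Real.exp_add, this, Real.exp_zero, mul_one]

theorem hardy_supercritical_flux_le {x : ℝ} (hp : 1 < p) (hβ : 0 < β) (hx : 0 ≤ x + 1 / p)
    (a b : E) :
    (β / p) ^ (p - 1) * (x + 1 / p) ^ β * ‖a‖ ^ p ≤
      ‖a - b‖ ^ p * (x + 1) ^ (p - 1 + β) + (β / p) ^ (p - 1) * (x + 1) ^ β * ‖b‖ ^ p := by
  have hp_inv : 1 / p < 1 := by rw [div_lt_one (by linarith)]; exact hp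
  have hc : 0 < β / p := by positivity
  have hX : 0 < x + 1 := by linarith
  have radon := norm_rpow_div_add_rpow_le hp.le (div_pos hc hX) zero_le_one a b
    (fun h ↦ absurd h one_ne_zero)
  rw [Real.one_rpow, div_one, add_comm (β / p / (x + 1))] at radon
  have rate := hardy_supercritical_rate_le hp hβ.le hx
  set D := 1 + β / p / (x + 1)
  have : 0 < D := by positivity
  calc (β / p) ^ (p - 1) * (x + 1 / p) ^ β * ‖a‖ ^ p
      ≤ (β / p) ^ (p - 1) * ((x + 1) ^ β / D ^ (p - 1)) * ‖a‖ ^ p := by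
        gcongr
        rwa [le_div_iff₀ (by positivity), mul_comm]
    _ = (β / p) ^ (p - 1) * (x + 1) ^ β * (‖a‖ ^ p / D ^ (p - 1)) := by ring
    _ ≤ (β / p) ^ (p - 1) * (x + 1) ^ β *
          (‖a - b‖ ^ p / (β / p / (x + 1)) ^ (p - 1) + ‖b‖ ^ p) := by gcongr
    _ = _ := by
        rw [Real.div_rpow hc.le hX.le, Real.rpow_add hX]
        field_simp

theorem hardy_supercritical_step {x y : ℝ} (hp : 1 < p) (hβ : 0 < β) (hx : 0 ≤ x + 1 / p)
    (hxy : x ≤ y) (hflux : x ^ β + β / p * y ^ (β - 1) ≤ (x + 1 / p) ^ β) (a b : E) :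
    (β / p) ^ p * (‖a‖ ^ p * y ^ (β - 1)) + (β / p) ^ (p - 1) * x ^ β * ‖a‖ ^ p ≤
      ‖a - b‖ ^ p * (y + 1) ^ (p - 1 + β) + (β / p) ^ (p - 1) * (x + 1) ^ β * ‖b‖ ^ p := by
  have hp_inv : 1 / p < 1 := by rw [div_lt_one (by linarith)]; exact hp
  have hc : 0 < β / p := by positivity
  calc _ = (β / p) ^ (p - 1) * (x ^ β + β / p * y ^ (β - 1)) * ‖a‖ ^ p := by
        rw [Real.rpow_sub_one hc.ne']; field_simp; ring
    _ ≤ (β / p) ^ (p - 1) * (x + 1 / p) ^ β * ‖a‖ ^ p := by gcongr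
    _ ≤ _ := hardy_supercritical_flux_le hp hβ hx a b
    _ ≤ _ := by
        gcongr
        linarith

-- `x ↦ x ^ r` is convex for `1 ≤ r` and concave for `r ≤ 1`, so its increment over an interval of
-- length `h` dominates the derivative at the left endpoint, respectively the right one.
theorem exists_shift_rpow_add_mul_rpow_sub_one_le {r h : ℝ} (hr : 0 ≤ r) (hh : 0 < h) :
    ∃ s ∈ Set.Icc (-h) 0, ∀ x, h ≤ x → (x + s) ^ r + r * h * x ^ (r - 1) ≤ (x + s + h) ^ r := by
  rcases le_total 1 r with hr₁ | hr₁
  · refine ⟨0, ⟨by linarith, le_rfl⟩, fun x hx ↦ ?_⟩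
    simpa only [add_zero] using
      rpow_add_mul_rpow_sub_one_le hr₁ (hh.trans_le hx) (by linarith)
  · refine ⟨-h, ⟨le_rfl, by linarith⟩, fun x hx ↦ ?_⟩
    have concave := add_rpow_le_rpow_add_mul_rpow_sub_one (h := -h) hr hr₁ (hh.trans_le hx)
      (by linarith)
    rw [neg_add_cancel_right]
    linarith

theorem hardy_supercritical_sum_range_le (hp : 1 < p) (hβ : 0 < β) {u : ℕ → E} {N : ℕ}
    (hu : u (N + 1) = 0) :
    (β / p) ^ p * ∑ n ∈ Finset.range N, ‖u (n + 1)‖ ^ p * ((n : ℝ) + 1) ^ (β - 1) ≤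
      ∑ n ∈ Finset.range (N + 1), ‖u (n + 1) - u n‖ ^ p * ((n : ℝ) + 1) ^ (p - 1 + β) := by
  have hp_inv : 1 / p < 1 := by rw [div_lt_one (by linarith)]; exact hp
  obtain ⟨s, ⟨hs, hs₀⟩, hflux⟩ :=
    exists_shift_rpow_add_mul_rpow_sub_one_le hβ.le (by positivity : 0 < 1 / p)
  have hstep (n : ℕ) : (β / p) ^ p * (‖u (n + 1)‖ ^ p * ((n : ℝ) + 1) ^ (β - 1)) +
      (β / p) ^ (p - 1) * ((n : ℝ) + 1 + s) ^ β * ‖u (n + 1)‖ ^ p ≤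
      ‖u (n + 1 + 1) - u (n + 1)‖ ^ p * ((n : ℝ) + 1 + 1) ^ (p - 1 + β) +
        (β / p) ^ (p - 1) * ((n : ℝ) + 1 + 1 + s) ^ β * ‖u (n + 1 + 1)‖ ^ p := by
    have : (0 : ℝ) ≤ n := n.cast_nonneg
    have hflux_n := hflux (n + 1) (by linarith)
    rw [mul_one_div] at hflux_n
    have := hardy_supercritical_step hp hβ (by linarith) (by linarith) hflux_n
      (u (n + 1)) (u (n + 1 + 1))
    rwa [norm_sub_rev, add_right_comm _ s 1] at this
  have telescoped := sum_range_add_le_of_step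
    (f := fun n ↦ (β / p) ^ p * (‖u (n + 1)‖ ^ p * ((n : ℝ) + 1) ^ (β - 1)))
    (g := fun n ↦ ‖u (n + 1 + 1) - u (n + 1)‖ ^ p * ((n : ℝ) + 1 + 1) ^ (p - 1 + β))
    (F := fun n ↦ -((β / p) ^ (p - 1) * ((n : ℝ) + 1 + s) ^ β * ‖u (n + 1)‖ ^ p))
    (fun n ↦ by push_cast; linarith [hstep n]) N
  have flux_nonneg : 0 ≤ (β / p) ^ (p - 1) * (((0 : ℕ) : ℝ) + 1 + s) ^ β * ‖u (0 + 1)‖ ^ p := by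
    have : 0 ≤ ((0 : ℕ) : ℝ) + 1 + s := by push_cast; linarith
    positivity
  rw [hu, norm_zero, Real.zero_rpow (by linarith), mul_zero, neg_zero, add_zero,
    ← Finset.mul_sum] at telescoped
  calc _ ≤ _ := telescoped
    _ ≤ ∑ n ∈ Finset.range N,
          ‖u (n + 1 + 1) - u (n + 1)‖ ^ p * ((n : ℝ) + 1 + 1) ^ (p - 1 + β) :=
        add_le_of_nonpos_right (neg_nonpos.2 flux_nonneg)
    _ ≤ _ := by
        rw [Finset.sum_range_succ']
        push_cast
        exact le_add_of_nonneg_right (by positivity)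

theorem hardy_supercritical_sum_range_le_tsum_of_eventually_eq_zero (hp : 1 < p) (hβ : 0 < β)
    {u : ℕ → E} (hu : ∀ᶠ n in atTop, u n = 0)
    (hsum : Summable fun n : ℕ ↦ ‖u (n + 1) - u n‖ ^ p * ((n : ℝ) + 1) ^ (p - 1 + β)) (N : ℕ) :
    (β / p) ^ p * ∑ n ∈ Finset.range N, ‖u (n + 1)‖ ^ p * ((n : ℝ) + 1) ^ (β - 1) ≤
      ∑' n : ℕ, ‖u (n + 1) - u n‖ ^ p * ((n : ℝ) + 1) ^ (p - 1 + β) := by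
  obtain ⟨M, hM⟩ := eventually_atTop.1 hu
  calc _ ≤ (β / p) ^ p *
        ∑ n ∈ Finset.range (max M N), ‖u (n + 1)‖ ^ p * ((n : ℝ) + 1) ^ (β - 1) := by
        gcongr
        exact le_max_right M N
    _ ≤ _ := hardy_supercritical_sum_range_le hp hβ (hM _ (by omega))
    _ ≤ _ := hsum.sum_le_tsum _ (fun _ _ ↦ by positivity)

theorem hardy_supercritical_sum_range_le_tsum (hp : 1 < p) (hβ : 0 < β) {u : ℕ → E}
    (hu : Tendsto u atTop (𝓝 0))
    (hsum : Summable fun n : ℕ ↦ ‖u (n + 1) - u n‖ ^ p * ((n : ℝ) + 1) ^ (p - 1 + β)) (N : ℕ) :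
    (β / p) ^ p * ∑ n ∈ Finset.range N, ‖u (n + 1)‖ ^ p * ((n : ℝ) + 1) ^ (β - 1) ≤
      ∑' n : ℕ, ‖u (n + 1) - u n‖ ^ p * ((n : ℝ) + 1) ^ (p - 1 + β) := by
  -- Soft thresholding at level `ε`: a contraction that makes `u` eventually zero.
  let v (ε : ℝ) (n : ℕ) : ℝ := max (‖u n‖ - ε) 0
  have hv_contract (ε : ℝ) (n : ℕ) : ‖v ε (n + 1) - v ε n‖ ≤ ‖u (n + 1) - u n‖ :=
    (abs_max_sub_max_le_abs _ _ _).trans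
      (by rw [sub_sub_sub_cancel_right]; exact abs_norm_sub_norm_le _ _)
  have hv_energy (ε : ℝ) (n : ℕ) : ‖v ε (n + 1) - v ε n‖ ^ p * ((n : ℝ) + 1) ^ (p - 1 + β) ≤
      ‖u (n + 1) - u n‖ ^ p * ((n : ℝ) + 1) ^ (p - 1 + β) := by
    gcongr
    exact hv_contract ε n
  have hv_hardy {ε : ℝ} (hε : 0 < ε) :
      (β / p) ^ p * ∑ n ∈ Finset.range N, ‖v ε (n + 1)‖ ^ p * ((n : ℝ) + 1) ^ (β - 1) ≤
        ∑' n : ℕ, ‖u (n + 1) - u n‖ ^ p * ((n : ℝ) + 1) ^ (p - 1 + β) := by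
    have hv_zero : ∀ᶠ n in atTop, v ε n = 0 := by
      filter_upwards [hu.norm.eventually_lt_const (by rwa [norm_zero])] with n hn
      exact max_eq_right (by linarith)
    have hv_sum := hsum.of_nonneg_of_le (fun n ↦ by positivity) (hv_energy ε)
    exact (hardy_supercritical_sum_range_le_tsum_of_eventually_eq_zero hp hβ hv_zero hv_sum N).trans
      (hv_sum.tsum_le_tsum (hv_energy ε) hsum)
  have hv_cont : Continuous fun ε ↦
      (β / p) ^ p * ∑ n ∈ Finset.range N, ‖v ε (n + 1)‖ ^ p * ((n : ℝ) + 1) ^ (β - 1) := by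
    have hp₀ : 0 ≤ p := by linarith
    fun_prop (disch := exact hp₀)
  have hlim := (hv_cont.tendsto 0).mono_left (nhdsWithin_le_nhds (s := Set.Ioi 0))
  simpa [v] using le_of_tendsto hlim (eventually_mem_nhdsWithin.mono fun ε ↦ hv_hardy)

theorem tendsto_zero_of_finite_support {X : Type*} [TopologicalSpace X] [Zero X] {u : ℕ → X}
    (hu : (Function.support u).Finite) : Tendsto u atTop (𝓝 0) := by
  rw [← Nat.cofinite_eq_atTop]
  exact (tendsto_const_nhds (x := (0 : X))).congr'
    (eventually_cofinite.2 (hu.subset fun n hn h ↦ hn h.symm))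

theorem summable_weighted_diff_of_finite_support (hp : p ≠ 0) (w : ℕ → ℝ) {u : ℕ → E}
    (hu : (Function.support u).Finite) :
    Summable fun n ↦ ‖u (n + 1) - u n‖ ^ p * w n := by
  refine summable_of_hasFiniteSupport
    (((hu.preimage (add_left_injective 1).injOn).union hu).subset fun n hn ↦ ?_)
  contrapose! hn
  simp_all

theorem summable_and_mul_tsum_le {f : ℕ → ℝ} {c T : ℝ} (hc : 0 < c) (hf : ∀ n, 0 ≤ f n)
    (h : ∀ N, c * ∑ n ∈ Finset.range N, f n ≤ T) : Summable f ∧ c * ∑' n, f n ≤ T := by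
  have hle (N : ℕ) : ∑ n ∈ Finset.range N, f n ≤ T / c := (le_div_iff₀' hc).2 (h N)
  exact ⟨summable_of_sum_range_le hf hle, (le_div_iff₀' hc).1 (Real.tsum_le_of_sum_range_le hf hle)⟩

end

theorem stmt_13_general {E : Type*} [SeminormedAddCommGroup E] (p α : ℝ) (hp : 1 < p) (hα0 : 0 ≤ α)
    (hα : α ≠ p - 1) (u : ℕ → E) (hu0 : u 0 = 0) (hu : p - 1 < α → Tendsto u atTop (𝓝 0))
    (hsum : Summable fun n : ℕ ↦ ‖u (n + 1) - u n‖ ^ p * ((n : ℝ) + 1) ^ α) :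
    (Summable fun n : ℕ ↦ ‖u (n + 1)‖ ^ p * ((n : ℝ) + 1) ^ (α - p)) ∧
      |(α - p + 1) / p| ^ p * ∑' n : ℕ, ‖u (n + 1)‖ ^ p * ((n : ℝ) + 1) ^ (α - p) ≤
        ∑' n : ℕ, ‖u (n + 1) - u n‖ ^ p * ((n : ℝ) + 1) ^ α := by
  have hp₀ : 0 < p := by linarith
  have hconst : α - p + 1 ≠ 0 := fun h ↦ hα (by linarith)
  refine summable_and_mul_tsum_le (by positivity) (fun n ↦ by positivity) fun N ↦ ?_
  rw [abs_div, abs_of_pos hp₀]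
  rcases hα.lt_or_gt with hlt | hgt
  · obtain ⟨β, rfl⟩ : ∃ β, α = p - 1 - β := ⟨p - 1 - α, by ring⟩
    have hβ : 0 < β := by linarith
    rw [show p - 1 - β - p + 1 = -β by ring, show p - 1 - β - p = -β - 1 by ring, abs_neg,
      abs_of_pos hβ]
    exact (hardy_subcritical_sum_range_le hp hβ (by linarith) hu0 N).trans
      (hsum.sum_le_tsum _ fun n _ ↦ by positivity)
  · obtain ⟨β, rfl⟩ : ∃ β, α = p - 1 + β := ⟨α - (p - 1), by ring⟩
    have hβ : 0 < β := by linarith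
    rw [show p - 1 + β - p + 1 = β by ring, show p - 1 + β - p = β - 1 by ring, abs_of_pos hβ]
    exact hardy_supercritical_sum_range_le_tsum hp hβ (hu hgt) hsum N

/-- Theorem 4.5 (inequality): for `p > 1`, `α ≥ 0`, `α ≠ p - 1`, the discrete weighted
`p`-Hardy inequality holds with the sharp continuous constant `|(α-p+1)/p|^p`. -/
theorem stmt_13 (p α : ℝ) (hp : 1 < p) (hα0 : 0 ≤ α) (hα : α ≠ p - 1) :
    ∀ u : ℕ → ℝ, (Function.support u).Finite → u 0 = 0 →
      ∑' n : ℕ, |u (n + 1) - u n| ^ p * ((n : ℝ) + 1) ^ α ≥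
        |(α - p + 1) / p| ^ p * ∑' n : ℕ, |u (n + 1)| ^ p * ((n : ℝ) + 1) ^ (α - p) := by
  intro u hu hu0
  exact (stmt_13_general p α hp hα0 hα u hu0
    (fun _ ↦ tendsto_zero_of_finite_support hu)
    (summable_weighted_diff_of_finite_support (by linarith) _ hu)).2
end

section
/- Let p > 1 and let α ≥ 0 be a real number with α ≠ p - 1. For every constant C > |(α - p + 1)/p|^p there exists a finitely supported sequence u : ℕ → ℝ with u_0 = 0, not identically zero, such that ∑_{n=1}^∞ |u_n - u_{n-1}|^p n^α < C · ∑_{n=1}^∞ |u_n|^p n^{α-p}. In other words, the constant |(α - p + 1)/p|^p in the discrete Hardy inequality is sharp. -/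
/-!
For `b = (p - 1 - α) / p` the sequence `n ^ b` is a virtual extremiser: `|b| ^ p` is the limit
ratio of its two Hardy summands, the one without differences being exactly `1 / n`. Since the
harmonic series diverges, the ratio of the two sums over `n ≤ M` tends to `|b| ^ p` as `M → ∞`.
Cutting the sequence off linearly between `M` and `2 * M` adds to the left-hand sum only an amount
bounded in `M`, because this `b` makes that sum scale invariant.
-/

open Filter Finset Topology

theorem tendsto_sum_range_div_sum_range {f g : ℕ → ℝ} {l : ℝ} (hg : ∀ n, 0 < g n)
    (hsum : Tendsto (fun n ↦ ∑ i ∈ range n, g i) atTop atTop)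
    (hfg : Tendsto (fun n ↦ f n / g n) atTop (𝓝 l)) :
    Tendsto (fun n ↦ (∑ i ∈ range n, f i) / ∑ i ∈ range n, g i) atTop (𝓝 l) := by
  have hlittle : (fun n ↦ f n - l * g n) =o[atTop] g := by
    refine Asymptotics.isLittleO_of_tendsto (fun n hn ↦ absurd hn (hg n).ne') ?_
    simpa only [sub_div, mul_div_cancel_right₀ _ (hg _).ne', sub_self] using hfg.sub_const l
  have hlim := (hlittle.sum_range (fun n ↦ (hg n).le) hsum).tendsto_div_nhds_zero.add_const l
  rw [zero_add] at hlim
  refine hlim.congr' ?_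
  filter_upwards [hsum.eventually_gt_atTop 0] with n hn
  rw [sum_sub_distrib, ← mul_sum, sub_div, mul_div_cancel_right₀ _ hn.ne', sub_add_cancel]

theorem rpow_le_rpow_abs_mul_rpow {x y c : ℝ} (a : ℝ) (hx : 0 < x) (hxy : x ≤ y)
    (hyc : y ≤ c * x) : y ^ a ≤ c ^ |a| * x ^ a := by
  have hone : 1 ≤ y / x := (one_le_div hx).2 hxy
  have hratio : (y / x) ^ a ≤ c ^ |a| :=
    calc (y / x) ^ a ≤ (y / x) ^ |a| := Real.rpow_le_rpow_of_exponent_le hone (le_abs_self a)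
      _ ≤ c ^ |a| :=
        Real.rpow_le_rpow (by positivity) ((div_le_iff₀ hx).2 hyc) (abs_nonneg a)
  rwa [Real.div_rpow (hx.le.trans hxy) hx.le, div_le_iff₀ (by positivity)] at hratio

theorem tendsto_rpow_sub_rpow_sub_one_div (b : ℝ) :
    Tendsto (fun x : ℝ ↦ (x ^ b - (x - 1) ^ b) / x ^ (b - 1)) atTop (𝓝 b) := by
  have hderiv : HasDerivAt (fun x : ℝ ↦ x ^ b) b 1 := by
    simpa using Real.hasDerivAt_rpow_const (x := 1) (p := b) (Or.inl one_ne_zero)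
  have hquot : Tendsto (fun x : ℝ ↦ -(x * ((1 - x⁻¹) ^ b - 1))) atTop (𝓝 b) := by
    simpa [← sub_eq_add_neg] using (hderiv.hasFDerivAt.lim_real (-1)).neg
  refine hquot.congr' ?_
  filter_upwards [eventually_ge_atTop 1] with x hx
  have hx0 : 0 < x := one_pos.trans_le hx
  rw [show 1 - x⁻¹ = (x - 1) / x by field_simp, Real.div_rpow (sub_nonneg.2 hx) hx0.le,
    Real.rpow_sub_one hx0.ne']
  field_simp
  ring

/-- The sequence `n ↦ n ^ b` on the positive integers, extended by `0` at `0`; the case distinction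
matters for `b = 0`, as `(0 : ℝ) ^ (0 : ℝ) = 1`. -/
noncomputable def powSeq (b : ℝ) (n : ℕ) : ℝ :=
  if n = 0 then 0 else (n : ℝ) ^ b

/-- The trial sequence for the Hardy inequality: `powSeq b` up to `M`, then linear from `M ^ b`
at `M` to `0` at `2 * M`, and `0` afterwards. It has this shape only for `M ≠ 0`. -/
noncomputable def truncPowSeq (b : ℝ) (M n : ℕ) : ℝ :=
  if n ≤ M then powSeq b n else (M : ℝ) ^ b * max (2 - (n : ℝ) / M) 0

variable {p b : ℝ} {M n : ℕ}

theorem powSeq_of_ne_zero (hn : n ≠ 0) : powSeq b n = (n : ℝ) ^ b := if_neg hn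

theorem tendsto_abs_powSeq_sub_rpow_mul_div (hp : 0 ≤ p) (b α : ℝ) :
    Tendsto (fun n : ℕ ↦ |powSeq b (n + 1) - powSeq b n| ^ p * ((n : ℝ) + 1) ^ α /
      ((n : ℝ) + 1) ^ (b * p - p + α)) atTop (𝓝 (|b| ^ p)) := by
  have hsucc : Tendsto (fun n : ℕ ↦ (n : ℝ) + 1) atTop atTop :=
    tendsto_atTop_add_const_right _ 1 tendsto_natCast_atTop_atTop
  refine (((tendsto_rpow_sub_rpow_sub_one_div b).comp hsucc).abs.rpow_const
    (Or.inr hp)).congr' ?_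
  filter_upwards [eventually_ne_atTop 0] with n hn
  have hpos : (0 : ℝ) < n + 1 := by positivity
  rw [powSeq_of_ne_zero n.succ_ne_zero, powSeq_of_ne_zero hn, Nat.cast_succ,
    show b * p - p + α = (b - 1) * p + α by ring, Real.rpow_add hpos, Real.rpow_mul hpos.le,
    mul_div_mul_right _ _ (by positivity), Function.comp_apply, add_sub_cancel_right, abs_div,
    abs_of_pos (Real.rpow_pos_of_pos hpos _), Real.div_rpow (abs_nonneg _) (by positivity)]

theorem truncPowSeq_of_le (h : n ≤ M) : truncPowSeq b M n = powSeq b n := if_pos h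

theorem truncPowSeq_of_ge (hM : M ≠ 0) (h : M ≤ n) :
    truncPowSeq b M n = (M : ℝ) ^ b * max (2 - (n : ℝ) / M) 0 := by
  rcases h.eq_or_lt with rfl | h
  · rw [truncPowSeq_of_le le_rfl, powSeq_of_ne_zero hM, div_self (by positivity)]
    norm_num
  · exact if_neg h.not_ge

theorem truncPowSeq_eq_zero (hM : M ≠ 0) (h : 2 * M ≤ n) : truncPowSeq b M n = 0 := by
  have hle : (2 : ℝ) ≤ n / M := (le_div_iff₀ (by positivity)).2 (by exact_mod_cast h)
  rw [truncPowSeq_of_ge hM (by lia), max_eq_right (sub_nonpos.2 hle), mul_zero]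

theorem support_truncPowSeq_finite (b : ℝ) (hM : M ≠ 0) :
    (Function.support (truncPowSeq b M)).Finite :=
  (Set.finite_Iio (2 * M)).subset fun _ hn ↦
    not_le.1 fun h ↦ hn (truncPowSeq_eq_zero hM h)

theorem truncPowSeq_zero_right (b : ℝ) (M : ℕ) : truncPowSeq b M 0 = 0 := by
  simp [truncPowSeq, powSeq]

theorem truncPowSeq_ne_zero (b : ℝ) (hM : M ≠ 0) : truncPowSeq b M ≠ 0 := by
  refine Function.ne_iff.2 ⟨M, ?_⟩
  rw [truncPowSeq_of_le le_rfl, powSeq_of_ne_zero hM]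
  exact (Real.rpow_pos_of_pos (by positivity) b).ne'

theorem abs_truncPowSeq_succ_sub_le (b : ℝ) (hM : M ≠ 0) (h : M ≤ n) :
    |truncPowSeq b M (n + 1) - truncPowSeq b M n| ≤ (M : ℝ) ^ (b - 1) := by
  have hpos : (0 : ℝ) < M := by positivity
  have hramp : |max (2 - ((n + 1 : ℕ) : ℝ) / M) 0 - max (2 - (n : ℝ) / M) 0| ≤ (M : ℝ)⁻¹ :=
    calc _ ≤ |(2 - ((n + 1 : ℕ) : ℝ) / M) - (2 - (n : ℝ) / M)| := abs_max_sub_max_le_abs _ _ _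
      _ = |-(M : ℝ)⁻¹| := by push_cast; ring_nf
      _ = (M : ℝ)⁻¹ := by rw [abs_neg, abs_of_pos (by positivity)]
  rw [truncPowSeq_of_ge hM (by lia), truncPowSeq_of_ge hM h, ← mul_sub, abs_mul,
    abs_of_pos (by positivity), Real.rpow_sub_one hpos.ne', div_eq_mul_inv]
  exact mul_le_mul_of_nonneg_left hramp (by positivity)

theorem sum_ramp_truncPowSeq_le (hp : 0 ≤ p) (b α : ℝ) (hM : M ≠ 0) :
    ∑ n ∈ range M, |truncPowSeq b M (M + n + 1) - truncPowSeq b M (M + n)| ^ p *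
        (((M + n : ℕ) : ℝ) + 1) ^ α ≤ 2 ^ |α| * (M : ℝ) ^ (b * p - p + α + 1) := by
  have hpos : (0 : ℝ) < M := by positivity
  calc _ ≤ ∑ n ∈ range M, ((M : ℝ) ^ (b - 1)) ^ p * (2 ^ |α| * (M : ℝ) ^ α) := by
        refine sum_le_sum fun n hn ↦ ?_
        have hlower : (M : ℝ) ≤ ((M + n : ℕ) : ℝ) + 1 := by exact_mod_cast (by lia)
        have hupper : ((M + n : ℕ) : ℝ) + 1 ≤ 2 * M := by
          have := mem_range.1 hn
          exact_mod_cast (by lia)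
        gcongr
        · exact abs_truncPowSeq_succ_sub_le b hM (by lia)
        · exact rpow_le_rpow_abs_mul_rpow α hpos hlower hupper
    _ = 2 ^ |α| * ((M : ℝ) ^ ((b - 1) * p) * (M : ℝ) ^ α * M) := by
        rw [sum_const, card_range, nsmul_eq_mul, Real.rpow_mul hpos.le]
        ring
    _ = 2 ^ |α| * (M : ℝ) ^ (b * p - p + α + 1) := by
        rw [← Real.rpow_add hpos, ← Real.rpow_add_one hpos.ne']
        ring_nf

theorem tsum_abs_truncPowSeq_sub_rpow_mul_le (hp : 0 < p) (b α : ℝ) (hM : M ≠ 0) :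
    ∑' n : ℕ, |truncPowSeq b M (n + 1) - truncPowSeq b M n| ^ p * ((n : ℝ) + 1) ^ α ≤
      ∑ n ∈ range M, |powSeq b (n + 1) - powSeq b n| ^ p * ((n : ℝ) + 1) ^ α +
        2 ^ |α| * (M : ℝ) ^ (b * p - p + α + 1) := by
  rw [tsum_eq_sum (s := range (2 * M)) fun n hn ↦ ?_, two_mul, sum_range_add]
  · refine add_le_add (sum_le_sum fun n hn ↦ ?_) (sum_ramp_truncPowSeq_le hp.le b α hM)
    have := mem_range.1 hn
    rw [truncPowSeq_of_le (by lia), truncPowSeq_of_le (by lia)]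
  · have : 2 * M ≤ n := by simpa using hn
    rw [truncPowSeq_eq_zero hM (by lia), truncPowSeq_eq_zero hM this, sub_zero, abs_zero,
      Real.zero_rpow hp.ne', zero_mul]

theorem sum_rpow_le_tsum_abs_truncPowSeq_rpow_mul (hp : 0 < p) (b α : ℝ) (hM : M ≠ 0) :
    ∑ n ∈ range M, ((n : ℝ) + 1) ^ (b * p - p + α) ≤
      ∑' n : ℕ, |truncPowSeq b M (n + 1)| ^ p * ((n : ℝ) + 1) ^ (α - p) := by
  have hsummable :
      Summable fun n : ℕ ↦ |truncPowSeq b M (n + 1)| ^ p * ((n : ℝ) + 1) ^ (α - p) := by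
    refine summable_of_ne_finset_zero (s := range (2 * M)) fun n hn ↦ ?_
    have : 2 * M ≤ n := by simpa using hn
    rw [truncPowSeq_eq_zero hM (by lia), abs_zero, Real.zero_rpow hp.ne', zero_mul]
  refine le_trans (sum_congr rfl fun n hn ↦ ?_).le
    (hsummable.sum_le_tsum (range M) fun n _ ↦ by positivity)
  have hpos : (0 : ℝ) < n + 1 := by positivity
  rw [truncPowSeq_of_le (mem_range.1 hn), powSeq_of_ne_zero n.succ_ne_zero, Nat.cast_succ,
    abs_of_pos (by positivity), ← Real.rpow_mul hpos.le, ← Real.rpow_add hpos]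
  ring_nf

theorem eventually_sum_abs_powSeq_sub_add_lt {α C : ℝ} (hp : 0 ≤ p) (hb : b * p - p + α = -1)
    (hC : |b| ^ p < C) (K : ℝ) :
    ∀ᶠ M in atTop,
      ∑ n ∈ range M, |powSeq b (n + 1) - powSeq b n| ^ p * ((n : ℝ) + 1) ^ α + K <
        C * ∑ n ∈ range M, ((n : ℝ) + 1) ^ (-1 : ℝ) := by
  have hharm : Tendsto (fun M ↦ ∑ n ∈ range M, ((n : ℝ) + 1) ^ (-1 : ℝ)) atTop atTop := by
    simpa only [Real.rpow_neg_one, one_div] using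
      Real.tendsto_sum_range_one_div_nat_succ_atTop
  have hratio := (tendsto_sum_range_div_sum_range (fun n ↦ by positivity) hharm
    (hb ▸ tendsto_abs_powSeq_sub_rpow_mul_div hp b α)).add (hharm.const_div_atTop K)
  rw [add_zero] at hratio
  filter_upwards [hratio.eventually_lt_const hC, hharm.eventually_gt_atTop 0] with M hlt hpos
  rwa [← add_div, div_lt_iff₀ hpos] at hlt

theorem stmt_14_general (p α : ℝ) (hp : 0 < p) (C : ℝ) (hC : |(α - p + 1) / p| ^ p < C) :
    ∃ u : ℕ → ℝ, (Function.support u).Finite ∧ u 0 = 0 ∧ u ≠ 0 ∧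
      ∑' n : ℕ, |u (n + 1) - u n| ^ p * ((n : ℝ) + 1) ^ α <
        C * ∑' n : ℕ, |u (n + 1)| ^ p * ((n : ℝ) + 1) ^ (α - p) := by
  obtain ⟨b, hb⟩ : ∃ b : ℝ, b = -((α - p + 1) / p) := ⟨_, rfl⟩
  have hexp : b * p - p + α = -1 := by rw [hb]; field_simp; ring
  rw [← abs_neg, ← hb] at hC
  have hC0 : 0 ≤ C := (Real.rpow_nonneg (abs_nonneg b) p).trans hC.le
  obtain ⟨M, hlt, hM⟩ := ((eventually_sum_abs_powSeq_sub_add_lt hp.le hexp hC (2 ^ |α|)).and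
    (eventually_ne_atTop 0)).exists
  have henergy := tsum_abs_truncPowSeq_sub_rpow_mul_le hp b α hM
  have hmass := sum_rpow_le_tsum_abs_truncPowSeq_rpow_mul hp b α hM
  rw [hexp, neg_add_cancel, Real.rpow_zero, mul_one] at henergy
  rw [hexp] at hmass
  exact ⟨truncPowSeq b M, support_truncPowSeq_finite b hM, truncPowSeq_zero_right b M,
    truncPowSeq_ne_zero b hM,
    henergy.trans_lt (hlt.trans_le (mul_le_mul_of_nonneg_left hmass hC0))⟩

/-- Theorem 4.5 (sharpness): for `p > 1`, `α ≥ 0`, `α ≠ p - 1`, no constant larger than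
`|(α-p+1)/p|^p` works in the discrete weighted `p`-Hardy inequality. -/
theorem stmt_14 (p α : ℝ) (hp : 1 < p) (hα0 : 0 ≤ α) (hα : α ≠ p - 1) :
    ∀ C : ℝ, |(α - p + 1) / p| ^ p < C →
      ∃ u : ℕ → ℝ, (Function.support u).Finite ∧ u 0 = 0 ∧ u ≠ 0 ∧
        ∑' n : ℕ, |u (n + 1) - u n| ^ p * ((n : ℝ) + 1) ^ α <
          C * ∑' n : ℕ, |u (n + 1)| ^ p * ((n : ℝ) + 1) ^ (α - p) :=
  stmt_14_general p α (one_pos.trans hp)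
end

section
/- Let p > 1. Then for every finitely supported sequence u : ℕ → ℝ with u_0 = u_1 = 0, ∑_{n=2}^∞ |u_n - u_{n-1}|^p n^{p-1} ≥ ((p-1)/p)^p · ∑_{n=2}^∞ |u_n|^p / (n (log n)^p). -/
/-! With `L k = log (k + 1)` and `v k = u (k + 1)`, the increments `L (k + 1) - L k ≥ 1 / (k + 2)`
reduce the inequality to Hardy's inequality with weights (Copson), which bounds the averages
`‖v k‖ / L k` by the slopes of `v` with respect to `L`. The latter follows by telescoping: by two
applications of Young's inequality, each summand on the left exceeds its counterpart on the right by
at most a multiple of the decrement of `L k * (‖v k‖ / L k) ^ p`, which vanishes at `k = 0`. -/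

open Finset Real

section WeightedHardy

variable {E : Type*} [SeminormedAddCommGroup E] {p : ℝ}

lemma mul_mul_rpow_sub_one_le (hp : 1 < p) {x y : ℝ} (hx : 0 ≤ x) (hy : 0 ≤ y) :
    p * (y * x ^ (p - 1)) ≤ y ^ p + (p - 1) * x ^ p := by
  have hp₁ : 0 < p - 1 := sub_pos.2 hp
  have young := young_inequality_of_nonneg hy (rpow_nonneg hx (p - 1))
    (HolderConjugate.conjExponent hp)
  rw [← rpow_mul hx, conjExponent, mul_div_cancel₀ p hp₁.ne'] at young
  calc p * (y * x ^ (p - 1)) ≤ p * (y ^ p / p + x ^ p / (p / (p - 1))) := by gcongr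
    _ = y ^ p + (p - 1) * x ^ p := by field_simp

/-- The increment of the telescoping argument: `y` and `x` are consecutive averages, with total
weights `m` and `m + l`, and `a` is the new slope, of weight `l`. -/
lemma mul_rpow_le_of_weighted_average_le (hp : 1 < p) {x y a l m : ℝ} (hx : 0 ≤ x) (hy : 0 ≤ y)
    (ha : 0 ≤ a) (hl : 0 ≤ l) (hm : 0 ≤ m) (h : (m + l) * x ≤ m * y + l * a) :
    l * x ^ p ≤
      (p / (p - 1)) ^ p * (l * a ^ p) + p / (p - 1) * (m * y ^ p - (m + l) * x ^ p) := by
  have hp₁ : 0 < p - 1 := sub_pos.2 hp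
  set q := p / (p - 1)
  have hq₀ : 0 ≤ q := div_nonneg (by linarith) hp₁.le
  have hqp : q * (p - 1) = p := div_mul_cancel₀ p hp₁.ne'
  have hx_pow : x * x ^ (p - 1) = x ^ p := by
    rw [mul_comm, ← rpow_add_one' hx (by linarith), sub_add_cancel]
  have old_average : m * (p * (y * x ^ (p - 1))) ≤ m * (y ^ p + (p - 1) * x ^ p) :=
    mul_le_mul_of_nonneg_left (mul_mul_rpow_sub_one_le hp hx hy) hm
  have new_slope : l * (p * (q * a * x ^ (p - 1))) ≤ l * (q ^ p * a ^ p + (p - 1) * x ^ p) := by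
    rw [← mul_rpow hq₀ ha]
    exact mul_le_mul_of_nonneg_left (mul_mul_rpow_sub_one_le hp hx (by positivity)) hl
  have average : (m + l) * (p * x ^ p) ≤
      m * (p * (y * x ^ (p - 1))) + l * (p * (a * x ^ (p - 1))) := by
    rw [← hx_pow]
    linarith [mul_le_mul_of_nonneg_right h (by positivity : 0 ≤ p * x ^ (p - 1))]
  have one_step : (p - 1) * (l * x ^ p) ≤
      (m * y ^ p - (m + l) * x ^ p) + l * (p * (a * x ^ (p - 1))) := by linarith
  have scaled := mul_le_mul_of_nonneg_left one_step hq₀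
  rw [← mul_assoc, hqp] at scaled
  linarith

/-- Copson's weighted form of Hardy's inequality, for the averages of the slopes of `v`. -/
theorem sum_range_mul_norm_div_rpow_le (hp : 1 < p) {L : ℕ → ℝ} (hL : StrictMono L)
    (hL₀ : 0 ≤ L 0) {v : ℕ → E} (hv : v 0 = 0) (N : ℕ) :
    ∑ k ∈ range N, (L (k + 1) - L k) * (‖v (k + 1)‖ / L (k + 1)) ^ p ≤
      (p / (p - 1)) ^ p *
        ∑ k ∈ range N, (L (k + 1) - L k) * (‖v (k + 1) - v k‖ / (L (k + 1) - L k)) ^ p := by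
  have hq : 0 ≤ p / (p - 1) := div_nonneg (by linarith) (sub_pos.2 hp).le
  have L_nonneg (k : ℕ) : 0 ≤ L k := hL₀.trans (hL.monotone k.zero_le)
  have L_succ_pos (k : ℕ) : 0 < L (k + 1) := (L_nonneg k).trans_lt (hL k.lt_succ_self)
  have mul_average (k : ℕ) : L k * (‖v k‖ / L k) = ‖v k‖ := by
    cases k with
    | zero => simp [hv]
    | succ k => exact mul_div_cancel₀ _ (L_succ_pos k).ne'
  set T : ℕ → ℝ := fun k ↦ L k * (‖v k‖ / L k) ^ p with hT
  have T_zero : T 0 = 0 := by simp [hT, hv, zero_rpow (by linarith : p ≠ 0)]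
  have T_nonneg : 0 ≤ T N :=
    mul_nonneg (L_nonneg N) (rpow_nonneg (div_nonneg (norm_nonneg _) (L_nonneg N)) p)
  have step (k : ℕ) : (L (k + 1) - L k) * (‖v (k + 1)‖ / L (k + 1)) ^ p ≤
      (p / (p - 1)) ^ p *
          ((L (k + 1) - L k) * (‖v (k + 1) - v k‖ / (L (k + 1) - L k)) ^ p) +
        p / (p - 1) * (T k - T (k + 1)) := by
    have l_pos : 0 < L (k + 1) - L k := sub_pos.2 (hL k.lt_succ_self)
    have average : (L k + (L (k + 1) - L k)) * (‖v (k + 1)‖ / L (k + 1)) ≤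
        L k * (‖v k‖ / L k) +
          (L (k + 1) - L k) * (‖v (k + 1) - v k‖ / (L (k + 1) - L k)) := by
      rw [add_sub_cancel, mul_average, mul_average, mul_div_cancel₀ _ l_pos.ne']
      exact norm_le_norm_add_norm_sub' _ _
    simpa only [hT, add_sub_cancel] using mul_rpow_le_of_weighted_average_le hp
      (div_nonneg (norm_nonneg _) (L_nonneg _)) (div_nonneg (norm_nonneg _) (L_nonneg _))
      (by positivity) l_pos.le (L_nonneg k) average
  calc _ ≤ _ := sum_le_sum fun k _ ↦ step k
    _ = (p / (p - 1)) ^ p *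
          ∑ k ∈ range N, (L (k + 1) - L k) * (‖v (k + 1) - v k‖ / (L (k + 1) - L k)) ^ p -
        p / (p - 1) * T N := by
      rw [sum_add_distrib, ← mul_sum, ← mul_sum, sum_range_sub', T_zero]
      ring
    _ ≤ _ := sub_le_self _ (mul_nonneg hq T_nonneg)

end WeightedHardy

section Leray

variable {E : Type*} [SeminormedAddCommGroup E] {p : ℝ}

lemma inv_add_one_le_log_add_one_sub_log {x : ℝ} (hx : 0 < x) :
    (x + 1)⁻¹ ≤ log (x + 1) - log x := by
  rw [← log_div (by positivity) hx.ne']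
  convert one_sub_inv_le_log_of_pos (by positivity : 0 < (x + 1) / x) using 1
  field_simp
  ring

lemma mul_div_rpow_le_rpow_mul_rpow_sub_one (hp : 1 ≤ p) {a l w : ℝ} (ha : 0 ≤ a) (hw : 0 < w)
    (h : w⁻¹ ≤ l) : l * (a / l) ^ p ≤ a ^ p * w ^ (p - 1) := by
  have hl : 0 < l := (inv_pos.2 hw).trans_le h
  calc l * (a / l) ^ p = a ^ p * l⁻¹ ^ (p - 1) := by
        rw [div_rpow ha hl.le, inv_rpow hl.le, rpow_sub_one hl.ne']
        field_simp
    _ ≤ a ^ p * w ^ (p - 1) := by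
        have := inv_le_of_inv_le₀ hw h
        have := sub_nonneg.2 hp
        gcongr

theorem sum_range_norm_rpow_div_mul_log_rpow_le (hp : 1 < p) {u : ℕ → E} (hu : u 1 = 0) (N : ℕ) :
    ∑ n ∈ range N, ‖u (n + 2)‖ ^ p / (((n : ℝ) + 2) * log ((n : ℝ) + 2) ^ p) ≤
      (p / (p - 1)) ^ p *
        ∑ n ∈ range N, ‖u (n + 2) - u (n + 1)‖ ^ p * ((n : ℝ) + 2) ^ (p - 1) := by
  have hq : 0 ≤ p / (p - 1) := div_nonneg (by linarith) (sub_pos.2 hp).le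
  set L : ℕ → ℝ := fun k ↦ log ((k : ℝ) + 1) with hL
  have L_strictMono : StrictMono L := fun i j hij ↦ log_lt_log (by positivity) (by gcongr)
  have L_succ (n : ℕ) : L (n + 1) = log ((n : ℝ) + 2) := by
    simp only [hL, Nat.cast_add_one, add_assoc, one_add_one_eq_two]
  have inv_le_increment (n : ℕ) : ((n : ℝ) + 2)⁻¹ ≤ L (n + 1) - L n := by
    have := inv_add_one_le_log_add_one_sub_log (n.cast_add_one_pos (α := ℝ))
    rwa [add_assoc, one_add_one_eq_two, ← L_succ] at this
  calc _ ≤ ∑ n ∈ range N, (L (n + 1) - L n) * (‖u (n + 2)‖ / L (n + 1)) ^ p := by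
        refine sum_le_sum fun n _ ↦ ?_
        have L_nonneg : 0 ≤ L (n + 1) := log_nonneg (le_add_of_nonneg_left (Nat.cast_nonneg _))
        rw [← L_succ, div_rpow (norm_nonneg _) L_nonneg, div_mul_eq_div_div_swap, div_eq_inv_mul]
        gcongr
        exact inv_le_increment n
    _ ≤ (p / (p - 1)) ^ p * ∑ n ∈ range N,
          (L (n + 1) - L n) * (‖u (n + 2) - u (n + 1)‖ / (L (n + 1) - L n)) ^ p :=
        sum_range_mul_norm_div_rpow_le hp L_strictMono (by simp [hL])
          (v := fun k ↦ u (k + 1)) hu N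
    _ ≤ _ := by
        refine mul_le_mul_of_nonneg_left (sum_le_sum fun n _ ↦ ?_) (rpow_nonneg hq p)
        exact mul_div_rpow_le_rpow_mul_rpow_sub_one hp.le (norm_nonneg _) (by positivity)
          (inv_le_increment n)

lemma summable_norm_sub_rpow_mul_of_finite_support (hp : p ≠ 0) {u : ℕ → E}
    (hu : (Function.support u).Finite) (w : ℕ → ℝ) :
    Summable fun n ↦ ‖u (n + 2) - u (n + 1)‖ ^ p * w n := by
  have h_union := (hu.preimage (add_left_injective 2).injOn).union
    (hu.preimage (add_left_injective 1).injOn)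
  refine summable_of_hasFiniteSupport (h_union.subset fun n hn ↦ ?_)
  contrapose! hn
  simp only [Set.mem_union, Set.mem_preimage, Function.mem_support, not_or, not_not] at hn
  simp [hn.1, hn.2, zero_rpow hp]

theorem stmt_15_general (hp : 1 < p) {u : ℕ → E} (hu : u 1 = 0)
    (h_summable : Summable fun n : ℕ ↦
      ‖u (n + 2) - u (n + 1)‖ ^ p * ((n : ℝ) + 2) ^ (p - 1)) :
    (Summable fun n : ℕ ↦ ‖u (n + 2)‖ ^ p / (((n : ℝ) + 2) * log ((n : ℝ) + 2) ^ p)) ∧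
      ((p - 1) / p) ^ p *
          ∑' n : ℕ, ‖u (n + 2)‖ ^ p / (((n : ℝ) + 2) * log ((n : ℝ) + 2) ^ p) ≤
        ∑' n : ℕ, ‖u (n + 2) - u (n + 1)‖ ^ p * ((n : ℝ) + 2) ^ (p - 1) := by
  have hq : 0 < p / (p - 1) := div_pos (by linarith) (sub_pos.2 hp)
  have term_nonneg (n : ℕ) :
      0 ≤ ‖u (n + 2)‖ ^ p / (((n : ℝ) + 2) * log ((n : ℝ) + 2) ^ p) := by
    have : 0 ≤ log ((n : ℝ) + 2) := log_nonneg (by linarith [n.cast_nonneg (α := ℝ)])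
    positivity
  have partial_sum_le (N : ℕ) := (sum_range_norm_rpow_div_mul_log_rpow_le hp hu N).trans <|
    mul_le_mul_of_nonneg_left (h_summable.sum_le_tsum (range N) fun _ _ ↦ by positivity)
      (rpow_nonneg hq.le p)
  refine ⟨summable_of_sum_range_le term_nonneg partial_sum_le, ?_⟩
  rw [← inv_div, inv_rpow hq.le, inv_mul_le_iff₀ (by positivity)]
  exact tsum_le_of_sum_range_le term_nonneg partial_sum_le

end Leray

/-- Proposition 4.7: discrete Leray-type inequality in the critical case `α = p - 1`,
with the continuous sharp constant `((p-1)/p)^p`, for sequences vanishing at `0` and `1`. -/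
theorem stmt_15 (p : ℝ) (hp : 1 < p) :
    ∀ u : ℕ → ℝ, (Function.support u).Finite → u 0 = 0 → u 1 = 0 →
      ∑' n : ℕ, |u (n + 2) - u (n + 1)| ^ p * ((n : ℝ) + 2) ^ (p - 1) ≥
        ((p - 1) / p) ^ p *
          ∑' n : ℕ, |u (n + 2)| ^ p / (((n : ℝ) + 2) * Real.log ((n : ℝ) + 2) ^ p) :=
  fun _ hu _ hu₁ ↦ (stmt_15_general hp hu₁ <|
    summable_norm_sub_rpow_mul_of_finite_support (by linarith) hu _).2
end

section
/- Let α be a negative integer. Then the sharp constant of the discrete weighted Hardy inequality for p = 2 is strictly smaller than the continuous one: the infimum over nonzero finitely supported sequences u : ℕ → ℝ with u_0 = 0 of the quotient ( ∑_{n=1}^∞ |u_n - u_{n-1}|² n^α ) / ( ∑_{n=1}^∞ |u_n|² n^{α-2} ) is strictly less than (α - 1)²/4. -/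
/-!
The plateau `u = 1` on `{1, …, N}`, `u = 0` elsewhere, has energy `1 + (N + 1) ^ α`: one jump at
each end. For `α < 0` the cost of the second jump tends to `0`, while the denominator
`1 + 2 ^ (α - p) + ⋯` exceeds `1` by a fixed amount as soon as `N ≥ 2`; hence the discrete sharp
constant is less than `1`. The continuous constant `((p - 1 - α) / p) ^ p` is at least `1` once
`α ≤ -1`.
-/

open Filter Topology

/-- The Rayleigh quotient of the discrete Hardy inequality with exponent `p` and weight `n ^ α`.
Both sums run over `n ≥ 1`, encoded by the shift `n ↦ n + 1`. -/
noncomputable def hardyQuotient (p α : ℝ) (u : ℕ → ℝ) : ℝ :=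
  (∑' n : ℕ, |u (n + 1) - u n| ^ p * ((n : ℝ) + 1) ^ α) /
    (∑' n : ℕ, |u (n + 1)| ^ p * ((n : ℝ) + 1) ^ (α - p))

/-- The sharp constant of the discrete Hardy inequality with exponent `p` and weight `n ^ α`: the
infimum of the Rayleigh quotient over nonzero finitely supported sequences vanishing at `0`. -/
noncomputable def hardyConstant (p α : ℝ) : ℝ :=
  sInf {q : ℝ | ∃ u : ℕ → ℝ, (Function.support u).Finite ∧ u 0 = 0 ∧ u ≠ 0 ∧
    q = hardyQuotient p α u}

/-- The test sequence for the Hardy quotient: the indicator function of `{1, …, N}`. -/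
noncomputable def plateau (N : ℕ) : ℕ → ℝ :=
  (Set.Icc 1 N).indicator 1

section Plateau

variable {N n : ℕ}

lemma plateau_of_mem (hn : n ∈ Set.Icc 1 N) : plateau N n = 1 :=
  Set.indicator_of_mem hn 1

lemma plateau_of_notMem (hn : n ∉ Set.Icc 1 N) : plateau N n = 0 :=
  Set.indicator_of_notMem hn 1

lemma plateau_apply_zero (N : ℕ) : plateau N 0 = 0 :=
  plateau_of_notMem (by simp)

lemma plateau_ne_zero (hN : 1 ≤ N) : plateau N ≠ 0 :=
  Function.ne_iff.mpr ⟨1, by simp [plateau_of_mem (Set.left_mem_Icc.mpr hN)]⟩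

lemma finite_support_plateau (N : ℕ) : (Function.support (plateau N)).Finite :=
  (Set.finite_Icc 1 N).subset Set.support_indicator_subset

lemma plateau_succ_eq_self (h₀ : n ≠ 0) (hN : n ≠ N) : plateau N (n + 1) = plateau N n := by
  have hmem : n + 1 ∈ Set.Icc 1 N ↔ n ∈ Set.Icc 1 N := by
    simp only [Set.mem_Icc]
    omega
  simp only [plateau, Set.indicator, hmem, Pi.one_apply]

end Plateau

section Quotient

variable {p α : ℝ} {N : ℕ}

lemma tsum_abs_plateau_sub_rpow_mul (hp : p ≠ 0) (hN : 1 ≤ N) (w : ℕ → ℝ) :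
    ∑' n, |plateau N (n + 1) - plateau N n| ^ p * w n = w 0 + w N := by
  have jump_left : |plateau N 1 - plateau N 0| ^ p = 1 := by
    simp [plateau_apply_zero, plateau_of_mem (Set.left_mem_Icc.mpr hN)]
  have jump_right : |plateau N (N + 1) - plateau N N| ^ p = 1 := by
    simp [plateau_of_mem (Set.right_mem_Icc.mpr hN), plateau_of_notMem (n := N + 1) (N := N)]
  rw [tsum_eq_sum (s := {0, N}), Finset.sum_pair (by omega), zero_add, jump_left, jump_right,
    one_mul, one_mul]
  intro n hn
  simp only [Finset.mem_insert, Finset.mem_singleton, not_or] at hn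
  simp [plateau_succ_eq_self hn.1 hn.2, Real.zero_rpow hp]

lemma tsum_abs_plateau_rpow_mul (hp : p ≠ 0) (N : ℕ) (w : ℕ → ℝ) :
    ∑' n, |plateau N (n + 1)| ^ p * w n = ∑ n ∈ Finset.range N, w n := by
  rw [tsum_eq_sum (s := Finset.range N)]
  · refine Finset.sum_congr rfl fun n hn => ?_
    have hmem : n + 1 ∈ Set.Icc 1 N := ⟨by omega, Finset.mem_range.mp hn⟩
    simp [plateau_of_mem hmem]
  · intro n hn
    have hmem : n + 1 ∉ Set.Icc 1 N := fun h => hn (Finset.mem_range.mpr h.2)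
    simp [plateau_of_notMem hmem, Real.zero_rpow hp]

lemma hardyQuotient_plateau (hp : p ≠ 0) (hN : 1 ≤ N) :
    hardyQuotient p α (plateau N) =
      (1 + ((N : ℝ) + 1) ^ α) / ∑ n ∈ Finset.range N, ((n : ℝ) + 1) ^ (α - p) := by
  rw [hardyQuotient, tsum_abs_plateau_sub_rpow_mul hp hN fun n => ((n : ℝ) + 1) ^ α,
    tsum_abs_plateau_rpow_mul hp N fun n => ((n : ℝ) + 1) ^ (α - p)]
  simp

lemma hardyQuotient_nonneg (p α : ℝ) (u : ℕ → ℝ) : 0 ≤ hardyQuotient p α u :=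
  div_nonneg (tsum_nonneg fun _ => by positivity) (tsum_nonneg fun _ => by positivity)

lemma hardyConstant_le_hardyQuotient {u : ℕ → ℝ} (hfin : (Function.support u).Finite)
    (h₀ : u 0 = 0) (hu : u ≠ 0) : hardyConstant p α ≤ hardyQuotient p α u := by
  refine csInf_le ⟨0, ?_⟩ ⟨u, hfin, h₀, hu, rfl⟩
  rintro q ⟨v, -, -, -, rfl⟩
  exact hardyQuotient_nonneg p α v

end Quotient

lemma one_add_two_rpow_le_sum_range {N : ℕ} (hN : 2 ≤ N) (s : ℝ) :
    1 + 2 ^ s ≤ ∑ n ∈ Finset.range N, ((n : ℝ) + 1) ^ s :=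
  calc (1 : ℝ) + 2 ^ s = ∑ n ∈ Finset.range 2, ((n : ℝ) + 1) ^ s := by
        norm_num [Finset.sum_range_succ]
    _ ≤ ∑ n ∈ Finset.range N, ((n : ℝ) + 1) ^ s :=
        Finset.sum_le_sum_of_subset_of_nonneg (Finset.range_mono hN) fun _ _ _ => by positivity

lemma tendsto_natCast_add_one_rpow_of_neg {α : ℝ} (hα : α < 0) :
    Tendsto (fun N : ℕ => ((N : ℝ) + 1) ^ α) atTop (𝓝 0) := by
  have hcast : Tendsto (fun N : ℕ => (N : ℝ) + 1) atTop atTop :=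
    tendsto_atTop_add_const_right _ 1 tendsto_natCast_atTop_atTop
  simpa [Function.comp_def] using (tendsto_rpow_neg_atTop (neg_pos.mpr hα)).comp hcast

theorem hardyConstant_lt_one {p α : ℝ} (hp : p ≠ 0) (hα : α < 0) : hardyConstant p α < 1 := by
  obtain ⟨N, hjump, hN⟩ : ∃ N : ℕ, ((N : ℝ) + 1) ^ α < 2 ^ (α - p) ∧ 2 ≤ N :=
    (((tendsto_natCast_add_one_rpow_of_neg hα).eventually_lt_const (by positivity)).and
      (eventually_ge_atTop 2)).exists
  have hN₁ : 1 ≤ N := one_le_two.trans hN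
  have hsum := one_add_two_rpow_le_sum_range hN (α - p)
  have hpos : (0 : ℝ) < 1 + 2 ^ (α - p) := by positivity
  calc hardyConstant p α
      ≤ hardyQuotient p α (plateau N) :=
        hardyConstant_le_hardyQuotient (finite_support_plateau N) (plateau_apply_zero N)
          (plateau_ne_zero hN₁)
    _ = (1 + ((N : ℝ) + 1) ^ α) / ∑ n ∈ Finset.range N, ((n : ℝ) + 1) ^ (α - p) :=
        hardyQuotient_plateau hp hN₁
    _ < 1 := (div_lt_one (hpos.trans_le hsum)).mpr (by linarith)

lemma one_le_continuous_hardyConstant {p α : ℝ} (hp : 0 < p) (hα : α ≤ -1) :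
    1 ≤ ((p - 1 - α) / p) ^ p :=
  Real.one_le_rpow ((one_le_div hp).mpr (by linarith)) hp.le

theorem stmt_18_general {p α : ℝ} (hp : 0 < p) (hα : α ≤ -1) :
    hardyConstant p α < ((p - 1 - α) / p) ^ p :=
  (hardyConstant_lt_one hp.ne' (by linarith)).trans_le (one_le_continuous_hardyConstant hp hα)

/-- Proposition 4.9: for `p = 2` and a negative integer exponent `α`, the sharp constant of
the discrete weighted Hardy inequality is strictly smaller than the continuous sharp
constant `(α-1)²/4`. -/
theorem stmt_18 (α : ℤ) (hα : α < 0) :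
    sInf { q : ℝ | ∃ u : ℕ → ℝ, (Function.support u).Finite ∧ u 0 = 0 ∧ u ≠ 0 ∧
        q = (∑' n : ℕ, |u (n + 1) - u n| ^ 2 * ((n : ℝ) + 1) ^ (α : ℝ)) /
            (∑' n : ℕ, |u (n + 1)| ^ 2 * ((n : ℝ) + 1) ^ ((α : ℝ) - 2)) } <
      ((α : ℝ) - 1) ^ 2 / 4 := by
  have h := stmt_18_general two_pos (α := α) (by exact_mod_cast Int.le_sub_one_of_lt hα)
  simp only [hardyConstant, hardyQuotient, Real.rpow_two] at h
  exact h.trans_eq (by ring)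
end

section
/- Let p > 1 and α > p - 1 be real numbers. For each positive integer n define h(n) = ∑_{k=0}^∞ c_k / n^{2k}, where c_k = (α-p+1)^{2k} / ( 2^{2k} (p-1)^{2k} (2k+1)! ). Then h(n) > 1 for every n ≥ 1, and for every finitely supported sequence u : ℕ → ℝ with u_0 = 0, ∑_{n=1}^∞ |u_n - u_{n-1}|^p n^α / h(n)^{p-1} ≥ ((α - p + 1)/p)^p · ∑_{n=1}^∞ |u_n|^p n^{α-p}. In particular, the discrete Hardy inequality with sharp constant ((α-p+1)/p)^p holds with the strictly positive remainder ∑_{n=1}^∞ |u_n - u_{n-1}|^p n^α (1 - h(n)^{-(p-1)}) on the left-hand side. -/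
/-!
A positive sequence `φ` with `-Δ_{p,w} φ ≥ v φ ^ (p - 1)` for the weighted discrete `p`-Laplacian
certifies a Hardy inequality between the weights `v` and `w`. In terms of the relative decrements
`t`, defined by `φ (n + 1) = (1 - t n) φ n`, this supersolution property becomes a Riccati
inequality for the fluxes `w n * t n ^ (p - 1)`, and the Hardy inequality follows edge by edge from
the convexity of `x ↦ x ^ p` and telescoping.

Write `γ = α - p + 1`. The correction is `h n = sinh z / z` with `z = γ / (2 (p - 1) n)`, and `t` is
chosen so that it cancels in the flux: the flux at the edge `(n - 1, n)` becomes
`(γ / p) ^ (p - 1) * X ^ γ`, where `X` is a mean of `n - 1` and `n`. The geometric mean makes the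
increments of `X ^ γ` large enough when `γ ≤ 2`, the arithmetic mean when `γ ≥ 2`.
-/

open Set

section Convexity

theorem convexOn_rpow_of_nonpos {r : ℝ} (hr : r ≤ 0) :
    ConvexOn ℝ (Ioi 0) fun x : ℝ => x ^ r := by
  refine ⟨convex_Ioi 0, fun x hx y hy a b ha hb hab => ?_⟩
  rw [mem_Ioi] at hx hy
  have hgeom : 0 < x ^ a * y ^ b := by positivity
  calc (a * x + b * y) ^ r ≤ (x ^ a * y ^ b) ^ r :=
        Real.rpow_le_rpow_of_nonpos hgeom
          (Real.geom_mean_le_arith_mean2_weighted ha hb hx.le hy.le hab) hr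
    _ = (x ^ r) ^ a * (y ^ r) ^ b := by
        rw [Real.mul_rpow (by positivity) (by positivity), ← Real.rpow_mul hx.le,
          ← Real.rpow_mul hy.le, mul_comm a, mul_comm b, Real.rpow_mul hx.le, Real.rpow_mul hy.le]
    _ ≤ a * x ^ r + b * y ^ r :=
        Real.geom_mean_le_arith_mean2_weighted ha hb (by positivity) (by positivity) hab

theorem two_le_one_add_rpow_add_one_sub_rpow {r x : ℝ} (hr : r ≤ 0 ∨ 1 ≤ r) (hx : |x| < 1) :
    2 ≤ (1 + x) ^ r + (1 - x) ^ r := by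
  have hconv : ConvexOn ℝ (Ioi 0) fun x : ℝ => x ^ r :=
    hr.elim convexOn_rpow_of_nonpos fun h =>
      (convexOn_rpow h).subset Ioi_subset_Ici_self (convex_Ioi 0)
  rw [abs_lt] at hx
  have hmid := hconv.2 (mem_Ioi.2 (by linarith : 0 < 1 + x)) (mem_Ioi.2 (by linarith : 0 < 1 - x))
    (by norm_num : (0 : ℝ) ≤ 1 / 2) (by norm_num : (0 : ℝ) ≤ 1 / 2) (by norm_num)
  simp only [smul_eq_mul] at hmid
  rw [show 1 / 2 * (1 + x) + 1 / 2 * (1 - x) = 1 by ring, Real.one_rpow] at hmid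
  linarith

theorem two_mul_mul_le_one_add_rpow_sub_one_sub_rpow {d y : ℝ} (hd₀ : 0 < d)
    (hd : d ≤ 1 ∨ 2 ≤ d) (hy₀ : 0 ≤ y) (hy₁ : y ≤ 1) :
    2 * d * y ≤ (1 + y) ^ d - (1 - y) ^ d := by
  let f : ℝ → ℝ := fun y => (1 + y) ^ d - (1 - y) ^ d - 2 * d * y
  have hf_cont : ContinuousOn f (Icc 0 1) := by
    have := hd₀.le
    fun_prop (disch := grind)
  have hf_deriv : ∀ x ∈ Ioo (0 : ℝ) 1,
      HasDerivAt f (d * ((1 + x) ^ (d - 1) + (1 - x) ^ (d - 1) - 2)) x := by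
    rintro x ⟨hx₀, hx₁⟩
    have hadd := ((hasDerivAt_id' x).const_add 1).rpow_const (p := d) (Or.inl (by linarith))
    have hsub := ((hasDerivAt_id' x).const_sub 1).rpow_const (p := d) (Or.inl (by linarith))
    exact ((hadd.sub hsub).sub ((hasDerivAt_id' x).const_mul (2 * d))).congr_deriv (by ring)
  have hf_mono : MonotoneOn f (Icc 0 1) := by
    refine monotoneOn_of_hasDerivWithinAt_nonneg (convex_Icc 0 1) hf_cont
      (fun x hx => (hf_deriv x (by rwa [interior_Icc] at hx)).hasDerivWithinAt) fun x hx => ?_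
    rw [interior_Icc] at hx
    have htwo := two_le_one_add_rpow_add_one_sub_rpow (r := d - 1)
      (hd.imp (fun h => by linarith) fun h => by linarith) (abs_lt.2 ⟨by linarith [hx.1], hx.2⟩)
    exact mul_nonneg hd₀.le (by linarith)
  have hle : f 0 ≤ f y := hf_mono (left_mem_Icc.2 zero_le_one) ⟨hy₀, hy₁⟩ hy₀
  simp only [f, add_zero, sub_zero, Real.one_rpow, mul_zero, sub_self] at hle
  linarith

theorem one_sub_mul_exp_two_mul_le {s : ℝ} (hs : 0 ≤ s) : (1 - s) * Real.exp (2 * s) ≤ 1 + s := by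
  rcases le_or_gt 1 s with hs₁ | hs₁
  · nlinarith [Real.exp_pos (2 * s)]
  have hpos : 0 < 1 - s := by linarith
  have hlog := Real.le_log_one_add_of_nonneg (x := 2 * s / (1 - s)) (by positivity)
  rw [show 2 * (2 * s / (1 - s)) / (2 * s / (1 - s) + 2) = 2 * s by field_simp; ring,
    show 1 + 2 * s / (1 - s) = (1 + s) / (1 - s) by field_simp; ring,
    Real.le_log_iff_exp_le (by positivity), le_div_iff₀ hpos] at hlog
  linarith

end Convexity

section Sinhc

/-- The hyperbolic cardinal sine `sinh x / x`, extended continuously by `1` at `0`. It is the sum of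
the series defining the correction in the weight of the Hardy inequality. -/
noncomputable def sinhc (x : ℝ) : ℝ := if x = 0 then 1 else Real.sinh x / x

theorem sinhc_of_ne_zero {x : ℝ} (hx : x ≠ 0) : sinhc x = Real.sinh x / x := if_neg hx

theorem one_lt_sinhc {x : ℝ} (hx : 0 < x) : 1 < sinhc x := by
  rw [sinhc_of_ne_zero hx.ne', one_lt_div hx]
  exact Real.self_lt_sinh_iff.2 hx

theorem hasSum_sinhc (x : ℝ) :
    HasSum (fun k : ℕ => x ^ (2 * k) / ((2 * k + 1).factorial : ℝ)) (sinhc x) := by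
  rcases eq_or_ne x 0 with rfl | hx
  · convert hasSum_single (f := fun k : ℕ => (0 : ℝ) ^ (2 * k) / ((2 * k + 1).factorial : ℝ)) 0
      (fun k hk => by simp [hk]) using 1
    simp [sinhc]
  · rw [sinhc_of_ne_zero hx]
    have hterm : ∀ k : ℕ, x ^ (2 * k + 1) / ((2 * k + 1).factorial : ℝ) / x =
        x ^ (2 * k) / ((2 * k + 1).factorial : ℝ) := fun k => by
      rw [pow_succ, div_right_comm, mul_div_cancel_right₀ _ hx]
    simpa only [hterm] using (Real.hasSum_sinh x).div_const x

end Sinhc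

section Criterion

variable {E : Type*} [SeminormedAddCommGroup E] {p : ℝ}

theorem rpow_mul_norm_rpow_le (hp : 1 ≤ p) {t : ℝ} (ht : t ∈ Ico (0 : ℝ) 1) (a b : E) :
    t ^ (p - 1) * ‖a‖ ^ p ≤ t ^ (p - 1) * (1 - t) ^ (1 - p) * ‖b‖ ^ p + ‖b - a‖ ^ p := by
  obtain ⟨ht₀, ht₁⟩ := ht
  have htriangle : ‖a‖ ≤ ‖b‖ + ‖b - a‖ := norm_le_norm_add_norm_sub b a
  rcases hp.eq_or_lt with rfl | hp
  · simpa using htriangle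
  rcases ht₀.eq_or_lt with rfl | ht₀
  · rw [Real.zero_rpow (by linarith), zero_mul, zero_mul, zero_mul, zero_add]
    positivity
  have hs : 0 < 1 - t := by linarith
  have hconv := (convexOn_rpow hp.le).2 (x := ‖b‖ / (1 - t)) (y := ‖b - a‖ / t)
    (mem_Ici.2 (by positivity)) (mem_Ici.2 (by positivity)) hs.le ht₀.le (by ring)
  simp only [smul_eq_mul, mul_div_cancel₀ _ hs.ne', mul_div_cancel₀ _ ht₀.ne'] at hconv
  calc t ^ (p - 1) * ‖a‖ ^ p
      ≤ t ^ (p - 1) * ((1 - t) * (‖b‖ / (1 - t)) ^ p + t * (‖b - a‖ / t) ^ p) := by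
        gcongr
        exact (Real.rpow_le_rpow (norm_nonneg a) htriangle (by linarith)).trans hconv
    _ = t ^ (p - 1) * (1 - t) ^ (1 - p) * ‖b‖ ^ p + ‖b - a‖ ^ p := by
        rw [Real.div_rpow (norm_nonneg _) hs.le, Real.div_rpow (norm_nonneg _) ht₀.le,
          Real.rpow_sub_one ht₀.ne', Real.rpow_sub hs, Real.rpow_one]
        field_simp

variable {v w t : ℕ → ℝ} {u : ℕ → E}

theorem sum_norm_rpow_mul_le_of_riccati (hp : 1 ≤ p) (hw : ∀ n, 0 ≤ w n)
    (ht : ∀ n, t n ∈ Ico (0 : ℝ) 1)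
    (hv : ∀ n, v n ≤ w (n + 1) * t (n + 1) ^ (p - 1)
      - w n * t n ^ (p - 1) * (1 - t n) ^ (1 - p)) (u : ℕ → E) (N : ℕ) :
    ∑ n ∈ Finset.range N, ‖u (n + 1)‖ ^ p * v n ≤
      ∑ n ∈ Finset.range N, ‖u (n + 1) - u n‖ ^ p * w n + w N * t N ^ (p - 1) * ‖u N‖ ^ p := by
  let B : ℕ → ℝ := fun n => w n * t n ^ (p - 1) * ‖u n‖ ^ p
  have hedge : ∀ n, ‖u (n + 1)‖ ^ p * v n ≤
      ‖u (n + 1) - u n‖ ^ p * w n + (B (n + 1) - B n) := by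
    intro n
    have hconv :=
      mul_le_mul_of_nonneg_left (rpow_mul_norm_rpow_le hp (ht n) (u n) (u (n + 1))) (hw n)
    have hriccati := mul_le_mul_of_nonneg_left (hv n) (by positivity : 0 ≤ ‖u (n + 1)‖ ^ p)
    simp only [B]
    linarith
  have hB₀ : 0 ≤ B 0 :=
    mul_nonneg (mul_nonneg (hw 0) (Real.rpow_nonneg (ht 0).1 _)) (by positivity)
  calc ∑ n ∈ Finset.range N, ‖u (n + 1)‖ ^ p * v n
      ≤ ∑ n ∈ Finset.range N, (‖u (n + 1) - u n‖ ^ p * w n + (B (n + 1) - B n)) :=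
        Finset.sum_le_sum fun n _ => hedge n
    _ = ∑ n ∈ Finset.range N, ‖u (n + 1) - u n‖ ^ p * w n + (B N - B 0) := by
        rw [Finset.sum_add_distrib, Finset.sum_range_sub]
    _ ≤ ∑ n ∈ Finset.range N, ‖u (n + 1) - u n‖ ^ p * w n + B N := by linarith

theorem tsum_norm_rpow_mul_le_of_riccati (hp : 1 ≤ p) (hw : ∀ n, 0 ≤ w n)
    (ht : ∀ n, t n ∈ Ico (0 : ℝ) 1)
    (hv : ∀ n, v n ≤ w (n + 1) * t (n + 1) ^ (p - 1)
      - w n * t n ^ (p - 1) * (1 - t n) ^ (1 - p)) (hu : (Function.support u).Finite) :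
    ∑' n, ‖u (n + 1)‖ ^ p * v n ≤ ∑' n, ‖u (n + 1) - u n‖ ^ p * w n := by
  have hp₀ : p ≠ 0 := by linarith
  obtain ⟨N, hN⟩ := hu.bddAbove
  have hzero : ∀ n, N < n → u n = 0 := fun n hn => by
    by_contra hne
    exact (hN hne).not_gt hn
  have hsum := sum_norm_rpow_mul_le_of_riccati hp hw ht hv u (N + 1)
  rw [hzero (N + 1) N.lt_succ_self, norm_zero, Real.zero_rpow hp₀, mul_zero, add_zero] at hsum
  rwa [tsum_eq_sum (s := Finset.range (N + 1)), tsum_eq_sum (s := Finset.range (N + 1))]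
  all_goals
    intro n hn
    rw [Finset.mem_range, not_lt] at hn
    simp [hzero n (by lia), hzero (n + 1) (by lia), Real.zero_rpow hp₀]

end Criterion

section Flux

variable {γ x : ℝ}

/-- The power `X ^ γ` of the geometric (`γ ≤ 2`) or arithmetic (`γ > 2`) mean `X` of `x - 1` and
`x`. Up to a constant factor it is the flux, at the edge `(x - 1, x)`, of the supersolution behind
the Hardy inequality. -/
noncomputable def meanFlux (γ x : ℝ) : ℝ :=
  if γ ≤ 2 then (x * (x - 1)) ^ (γ / 2) else (x - 1 / 2) ^ γ

/- Treats both means at once: `d = γ / 2`, `y = 1 / x` for the geometric one and `d = γ`,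
`y = 1 / (2 x)` for the arithmetic one. -/
theorem exists_meanFlux_eq (hγ : 0 < γ) (hx : 1 ≤ x) :
    ∃ d y : ℝ, 0 < d ∧ (d ≤ 1 ∨ 2 ≤ d) ∧ 0 ≤ y ∧ y ≤ 1 ∧ 2 * d * y = γ / x ∧
      meanFlux γ x = x ^ γ * (1 - y) ^ d ∧ meanFlux γ (x + 1) = x ^ γ * (1 + y) ^ d := by
  have hx₀ : 0 < x := by linarith
  rcases le_or_gt γ 2 with hγ₂ | hγ₂
  · have hy : 1 / x ≤ 1 := (div_le_one hx₀).2 hx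
    have hpow : (x ^ 2) ^ (γ / 2) = x ^ γ := by
      rw [← Real.rpow_natCast_mul hx₀.le, Nat.cast_ofNat, mul_div_cancel₀ _ two_ne_zero]
    refine ⟨γ / 2, 1 / x, by positivity, .inl (by linarith), by positivity, hy, by ring, ?_, ?_⟩
    · rw [meanFlux, if_pos hγ₂, ← hpow, ← Real.mul_rpow (by positivity) (by linarith)]
      congr 1
      field_simp
    · rw [meanFlux, if_pos hγ₂, ← hpow, ← Real.mul_rpow (by positivity) (by positivity)]
      congr 1
      field_simp
      ring
  · have hy : 1 / (2 * x) ≤ 1 := (div_le_one (by positivity)).2 (by linarith)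
    refine ⟨γ, 1 / (2 * x), hγ, .inr hγ₂.le, by positivity, hy, by field_simp, ?_, ?_⟩
    · rw [meanFlux, if_neg hγ₂.not_ge, ← Real.mul_rpow hx₀.le (by linarith)]
      congr 1
      field_simp
    · rw [meanFlux, if_neg hγ₂.not_ge, ← Real.mul_rpow hx₀.le (by positivity)]
      congr 1
      field_simp
      ring

theorem meanFlux_nonneg (hx : 1 ≤ x) : 0 ≤ meanFlux γ x := by
  have hgeom : 0 ≤ x * (x - 1) := mul_nonneg (by linarith) (by linarith)
  have harith : 0 ≤ x - 1 / 2 := by linarith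
  unfold meanFlux
  split_ifs
  exacts [Real.rpow_nonneg hgeom _, Real.rpow_nonneg harith _]

theorem meanFlux_le (hγ : 0 < γ) (hx : 1 ≤ x) :
    meanFlux γ x ≤ x ^ γ * Real.exp (-(γ / (2 * x))) := by
  obtain ⟨d, y, hd, -, -, hy, hdy, hflux, -⟩ := exists_meanFlux_eq hγ hx
  rw [hflux]
  gcongr
  calc (1 - y) ^ d ≤ Real.exp (-y) ^ d :=
        Real.rpow_le_rpow (by linarith) (Real.one_sub_le_exp_neg y) hd.le
    _ = Real.exp (-(γ / (2 * x))) := by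
        rw [← Real.exp_mul, show γ / (2 * x) = γ / x / 2 by ring, ← hdy]
        congr 1
        ring

theorem meanFlux_mul_exp_le (hγ : 0 < γ) (hx : 1 ≤ x) :
    meanFlux γ x * Real.exp (γ / x) ≤ meanFlux γ (x + 1) := by
  obtain ⟨d, y, hd, -, hy₀, hy₁, hdy, hflux, hflux'⟩ := exists_meanFlux_eq hγ hx
  have hy : 0 ≤ 1 - y := by linarith
  rw [hflux, hflux', mul_assoc]
  gcongr
  calc (1 - y) ^ d * Real.exp (γ / x) = ((1 - y) * Real.exp (2 * y)) ^ d := by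
        rw [Real.mul_rpow hy (Real.exp_pos _).le, ← Real.exp_mul, ← hdy, mul_right_comm]
    _ ≤ (1 + y) ^ d := by
        gcongr
        exact one_sub_mul_exp_two_mul_le hy₀

theorem mul_rpow_sub_one_le_meanFlux_sub (hγ : 0 < γ) (hx : 1 ≤ x) :
    γ * x ^ (γ - 1) ≤ meanFlux γ (x + 1) - meanFlux γ x := by
  obtain ⟨d, y, hd₀, hd, hy₀, hy₁, hdy, hflux, hflux'⟩ := exists_meanFlux_eq hγ hx
  have hx₀ : 0 < x := by linarith
  calc γ * x ^ (γ - 1) = x ^ γ * (2 * d * y) := by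
        rw [hdy, Real.rpow_sub_one hx₀.ne']
        ring
    _ ≤ x ^ γ * ((1 + y) ^ d - (1 - y) ^ d) := by
        gcongr
        exact two_mul_mul_le_one_add_rpow_sub_one_sub_rpow hd₀ hd hy₀ hy₁
    _ = meanFlux γ (x + 1) - meanFlux γ x := by
        rw [hflux, hflux']
        ring

end Flux

section Riccati

variable {p γ x : ℝ}

/-- The corrected weight `x ^ α / h ^ (p - 1)` with `α = γ + p - 1`, where `h` is the sum of the
series of the theorem in closed form. -/
noncomputable def correctedWeight (p γ x : ℝ) : ℝ :=
  x ^ (γ + p - 1) / sinhc (γ / (2 * (p - 1) * x)) ^ (p - 1)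

/-- The relative decrement of the supersolution along the edge `(x - 1, x)`, chosen so that its flux
for `correctedWeight` is a multiple of `meanFlux`. -/
noncomputable def decrement (p γ x : ℝ) : ℝ :=
  (1 - 1 / p) * ((meanFlux γ x / x ^ γ) ^ (1 / (p - 1)) * (2 * Real.sinh (γ / (2 * (p - 1) * x))))

theorem correctedWeight_nonneg (hp : 1 < p) (hγ : 0 < γ) (hx : 0 < x) :
    0 ≤ correctedWeight p γ x := by
  have : 0 < p - 1 := by linarith
  have hsinhc : 0 < sinhc (γ / (2 * (p - 1) * x)) :=
    zero_lt_one.trans (one_lt_sinhc (by positivity))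
  unfold correctedWeight
  positivity

theorem decrement_nonneg (hp : 1 < p) (hγ : 0 < γ) (hx : 1 ≤ x) : 0 ≤ decrement p γ x := by
  have : 0 < p - 1 := by linarith
  have : 0 < x := by linarith
  have hθ : 0 < 1 - 1 / p := by rw [sub_pos, div_lt_one] <;> linarith
  have hflux := meanFlux_nonneg (γ := γ) hx
  have : 0 < Real.sinh (γ / (2 * (p - 1) * x)) := Real.sinh_pos_iff.2 (by positivity)
  unfold decrement
  positivity

theorem decrement_le (hp : 1 < p) (hγ : 0 < γ) (hx : 1 ≤ x) :
    decrement p γ x ≤ (1 - 1 / p) * (1 - Real.exp (-(γ / ((p - 1) * x)))) := by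
  have hp₁ : 0 < p - 1 := by linarith
  have : 0 < x := by linarith
  have hθ : 0 < 1 - 1 / p := by rw [sub_pos, div_lt_one] <;> linarith
  have hflux := meanFlux_nonneg (γ := γ) hx
  set z := γ / (2 * (p - 1) * x) with hz
  have : 0 < Real.sinh z := Real.sinh_pos_iff.2 (by positivity)
  have hratio : (meanFlux γ x / x ^ γ) ^ (1 / (p - 1)) ≤ Real.exp (-z) := by
    calc (meanFlux γ x / x ^ γ) ^ (1 / (p - 1))
        ≤ Real.exp (-(γ / (2 * x))) ^ (1 / (p - 1)) := by
          gcongr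
          rw [div_le_iff₀' (by positivity)]
          exact meanFlux_le hγ hx
      _ = Real.exp (-z) := by
          rw [← Real.exp_mul, hz]
          congr 1
          field_simp
  rw [decrement]
  gcongr
  calc (meanFlux γ x / x ^ γ) ^ (1 / (p - 1)) * (2 * Real.sinh z)
      ≤ Real.exp (-z) * (2 * Real.sinh z) := by gcongr
    _ = 1 - Real.exp (-z + -z) := by
        rw [Real.sinh_eq, mul_div_cancel₀ _ two_ne_zero, mul_sub, ← Real.exp_add, ← Real.exp_add,
          neg_add_cancel, Real.exp_zero]
    _ = 1 - Real.exp (-(γ / ((p - 1) * x))) := by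
        congr 2
        rw [hz]
        field_simp
        ring

theorem decrement_mem_Ico (hp : 1 < p) (hγ : 0 < γ) (hx : 1 ≤ x) :
    decrement p γ x ∈ Ico (0 : ℝ) 1 := by
  have hθ₀ : 0 < 1 / p := by positivity
  have hθ₁ : 1 / p < 1 := by rw [div_lt_one] <;> linarith
  refine ⟨decrement_nonneg hp hγ hx, (decrement_le hp hγ hx).trans_lt ?_⟩
  nlinarith [Real.exp_pos (-(γ / ((p - 1) * x)))]

theorem correctedWeight_mul_decrement_rpow (hp : 1 < p) (hγ : 0 < γ) (hx : 1 ≤ x) :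
    correctedWeight p γ x * decrement p γ x ^ (p - 1) = (γ / p) ^ (p - 1) * meanFlux γ x := by
  have hp₁ : 0 < p - 1 := by linarith
  have hx₀ : 0 < x := by linarith
  have hflux := meanFlux_nonneg (γ := γ) hx
  set z := γ / (2 * (p - 1) * x) with hz
  have hz₀ : 0 < z := by positivity
  have hsinhc : 0 < sinhc z := zero_lt_one.trans (one_lt_sinhc hz₀)
  have hdecr : decrement p γ x =
      γ / p * ((meanFlux γ x / x ^ γ) ^ (1 / (p - 1)) * (sinhc z / x)) := by
    rw [decrement, sinhc_of_ne_zero hz₀.ne', ← hz, hz]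
    field_simp
  have hpow : x ^ (γ + p - 1) = x ^ γ * x ^ (p - 1) := by
    rw [← Real.rpow_add hx₀, add_sub_assoc]
  rw [correctedWeight, ← hz, hdecr, hpow, Real.mul_rpow (by positivity) (by positivity),
    Real.mul_rpow (by positivity) (by positivity), ← Real.rpow_mul (by positivity),
    one_div_mul_cancel hp₁.ne', Real.rpow_one, Real.div_rpow hsinhc.le hx₀.le]
  field_simp

theorem one_sub_decrement_rpow_le (hp : 1 < p) (hγ : 0 < γ) (hx : 1 ≤ x) :
    (1 - decrement p γ x) ^ (1 - p) ≤ 1 / p + (1 - 1 / p) * Real.exp (γ / x) := by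
  have hp₁ : 0 < p - 1 := by linarith
  have : 0 < x := by linarith
  have hθ₀ : 0 < 1 / p := by positivity
  have hθ₁ : 0 ≤ 1 - 1 / p := by rw [sub_nonneg, div_le_one] <;> linarith
  set ε := Real.exp (-(γ / ((p - 1) * x))) with hε
  have hε₀ : 0 < ε := Real.exp_pos _
  have hbase : 1 / p * 1 + (1 - 1 / p) * ε ≤ 1 - decrement p γ x := by
    linarith [decrement_le hp hγ hx]
  calc (1 - decrement p γ x) ^ (1 - p) ≤ (1 / p * 1 + (1 - 1 / p) * ε) ^ (1 - p) :=
        Real.rpow_le_rpow_of_nonpos (by positivity) hbase (by linarith)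
    _ ≤ 1 / p * 1 ^ (1 - p) + (1 - 1 / p) * ε ^ (1 - p) :=
        (convexOn_rpow_of_nonpos (by linarith)).2 (mem_Ioi.2 one_pos) (mem_Ioi.2 hε₀) hθ₀.le hθ₁
          (by ring)
    _ = 1 / p + (1 - 1 / p) * Real.exp (γ / x) := by
        rw [Real.one_rpow, mul_one, hε, ← Real.exp_mul]
        congr 3
        field_simp
        ring

theorem riccati_correctedWeight (hp : 1 < p) (hγ : 0 < γ) (hx : 1 ≤ x) :
    (γ / p) ^ p * x ^ (γ - 1) ≤
      correctedWeight p γ (x + 1) * decrement p γ (x + 1) ^ (p - 1)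
        - correctedWeight p γ x * decrement p γ x ^ (p - 1) * (1 - decrement p γ x) ^ (1 - p) := by
  have hp₀ : 0 < p := by linarith
  have hθ₁ : 0 ≤ 1 - 1 / p := by rw [sub_nonneg, div_le_one] <;> linarith
  set m := meanFlux γ x
  set m' := meanFlux γ (x + 1)
  have hdecr := mul_le_mul_of_nonneg_left (one_sub_decrement_rpow_le hp hγ hx)
    (meanFlux_nonneg (γ := γ) hx)
  have hincr := mul_le_mul_of_nonneg_left (mul_rpow_sub_one_le_meanFlux_sub hγ hx)
    (by positivity : 0 ≤ 1 / p)
  have hexp := mul_le_mul_of_nonneg_left (meanFlux_mul_exp_le hγ hx) hθ₁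
  rw [correctedWeight_mul_decrement_rpow hp hγ hx,
    correctedWeight_mul_decrement_rpow hp hγ (by linarith : 1 ≤ x + 1)]
  calc (γ / p) ^ p * x ^ (γ - 1) = (γ / p) ^ (p - 1) * (1 / p * (γ * x ^ (γ - 1))) := by
        rw [Real.rpow_sub_one (div_pos hγ hp₀).ne']
        field_simp
    _ ≤ (γ / p) ^ (p - 1) * (m' - m * (1 - decrement p γ x) ^ (1 - p)) := by
        gcongr
        linarith
    _ = _ := by ring

end Riccati

theorem tsum_norm_rpow_mul_le_tsum_correctedWeight {E : Type*} [SeminormedAddCommGroup E]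
    {p γ : ℝ} (hp : 1 < p) (hγ : 0 < γ) {u : ℕ → E} (hu : (Function.support u).Finite) :
    (γ / p) ^ p * ∑' n : ℕ, ‖u (n + 1)‖ ^ p * ((n : ℝ) + 1) ^ (γ - 1) ≤
      ∑' n : ℕ, ‖u (n + 1) - u n‖ ^ p * correctedWeight p γ (n + 1) := by
  have hone : ∀ n : ℕ, (1 : ℝ) ≤ n + 1 := fun n => by linarith [n.cast_nonneg (α := ℝ)]
  have hmain := tsum_norm_rpow_mul_le_of_riccati (u := u)
    (v := fun n => (γ / p) ^ p * ((n : ℝ) + 1) ^ (γ - 1))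
    (w := fun n => correctedWeight p γ (n + 1)) (t := fun n => decrement p γ (n + 1)) hp.le
    (fun n => correctedWeight_nonneg hp hγ n.cast_add_one_pos)
    (fun n => decrement_mem_Ico hp hγ (hone n))
    (fun n => by simpa using riccati_correctedWeight hp hγ (hone n)) hu
  simpa only [mul_left_comm _ ((γ / p) ^ p), tsum_mul_left] using hmain

theorem stmt_19_general {E : Type*} [SeminormedAddCommGroup E] (p α : ℝ) (hp : 1 < p)
    (hα : p - 1 < α) (h : ℕ → ℝ)
    (hh : ∀ n : ℕ, h n = ∑' k : ℕ, (α - p + 1) ^ (2 * k) /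
      (2 ^ (2 * k) * (p - 1) ^ (2 * k) * (Nat.factorial (2 * k + 1) : ℝ) *
        (n : ℝ) ^ (2 * k))) :
    (∀ n : ℕ, 1 ≤ n → 1 < h n) ∧
    ∀ u : ℕ → E, (Function.support u).Finite →
      ∑' n : ℕ, ‖u (n + 1) - u n‖ ^ p * ((n : ℝ) + 1) ^ α / h (n + 1) ^ (p - 1) ≥
        ((α - p + 1) / p) ^ p * ∑' n : ℕ, ‖u (n + 1)‖ ^ p * ((n : ℝ) + 1) ^ (α - p) := by
  have : 0 < p - 1 := by linarith
  have hγ : 0 < α - p + 1 := by linarith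
  have hα_eq : α - p + 1 + p - 1 = α := by ring
  have h_eq : ∀ n : ℕ, h n = sinhc ((α - p + 1) / (2 * (p - 1) * n)) := fun n => by
    rw [hh, ← (hasSum_sinhc _).tsum_eq]
    refine tsum_congr fun k => ?_
    rw [div_pow, mul_pow, mul_pow, div_div, mul_right_comm]
  refine ⟨fun n hn => ?_, fun u hu => ?_⟩
  · rw [h_eq]
    exact one_lt_sinhc (by positivity)
  · simpa [correctedWeight, h_eq, hα_eq, mul_div_assoc] using
      tsum_norm_rpow_mul_le_tsum_correctedWeight hp hγ hu

/-- Theorem 4.11 (key step, case `α > p - 1`): with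
`h(n) = ∑_{k=0}^∞ (α-p+1)^{2k}/(2^{2k}(p-1)^{2k}(2k+1)! n^{2k})`, one has `h(n) > 1` for
all `n ≥ 1`, and the improved discrete Hardy inequality
`∑ |u_n - u_{n-1}|^p n^α / h(n)^{p-1} ≥ ((α-p+1)/p)^p ∑ |u_n|^p n^{α-p}` holds; hence the
Hardy inequality holds with the strictly positive remainder
`∑ |u_n - u_{n-1}|^p n^α (1 - h(n)^{-(p-1)})`. -/
theorem stmt_19 (p α : ℝ) (hp : 1 < p) (hα : p - 1 < α)
    (h : ℕ → ℝ)
    (hh : ∀ n : ℕ, h n = ∑' k : ℕ, (α - p + 1) ^ (2 * k) /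
      (2 ^ (2 * k) * (p - 1) ^ (2 * k) * (Nat.factorial (2 * k + 1) : ℝ) *
        (n : ℝ) ^ (2 * k))) :
    (∀ n : ℕ, 1 ≤ n → 1 < h n) ∧
    ∀ u : ℕ → ℝ, (Function.support u).Finite → u 0 = 0 →
      ∑' n : ℕ, |u (n + 1) - u n| ^ p * ((n : ℝ) + 1) ^ α / h (n + 1) ^ (p - 1) ≥
        ((α - p + 1) / p) ^ p * ∑' n : ℕ, |u (n + 1)| ^ p * ((n : ℝ) + 1) ^ (α - p) := by
  obtain ⟨h_one_lt, hardy⟩ := stmt_19_general (E := ℝ) p α hp hα h hh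
  exact ⟨h_one_lt, fun u hu _ => hardy u hu⟩
end
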